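/- arXiv:0911.0445 — 4 statements merged into one kernel-verified Lean document; each statement's English description precedes it below -/
import Mathlib

section
/- Let n ≥ 47 and let G be a primitive subgroup of S_n that does not contain the alternating group A_n. Then G does not have the universal transversal property. -/
/-!
Suppose `G` has the universal transversal property, and let `f` be the largest number of points
fixed by a nonidentity element of `G`.

*Upper bound for `f`.* If `g ∈ G` has support `S` with `2 |S| ≤ n + 1`, the property applied to `S`
and a partition with `S` as a class produces a conjugate of `g` whose support meets `S` in a single
point. The commutator of the two is a 3-cycle, so `A_n ≤ G` by Jordan's theorem. Hence
`2 f + 2 ≤ n`.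

*Lower bound for `f`.* Every `r`-set lies in a `G`-translate of a fixed `(r+1)`-set, so
`n.choose r ≤ |G| (r + 1)`; on the other hand `|G| ≤ n (n - 1) ⋯ (n - f)`. With `r = ⌊n / 2⌋` this
gives `f ≥ 7` and, roughly, `f ≥ n / log₂ n`.

*Multiple transitivity.* For an `(f-2)`-set `A`, join two points `x`, `y` outside `A` if some
nonidentity element of `G` fixes `A + x + y`. By the universal transversal property this graph has
an edge across every cut. A counting argument shows that its edges at a given vertex `x` go to a
single orbit of the stabilizer of `A + x`. It follows that the stabilizers of sets with at most
`f - 2` points have at most two orbits outside the set, and then that they are transitive there: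
`G` is `(f-1)`-transitive.

*Large degree.* If `n ≥ 256`, some `g ∈ G` acts on an `(f-1)`-set with cycles of three coprime
prime power lengths whose product exceeds `n - f + 1`. The powers of `g` of the three prime orders
have together at least `n + f - 1 > 3 f` fixed points, counted with multiplicity, although each has
at most `f`.

*Small degree.* If `n < 256`, some prime `p` with `n / 2 < p ≤ n - 3` divides `|G|`, and
`G` induces the full symmetric group on sets of `n - p` points. By Sylow's theorem this action can
be realised in the normalizer of a `p`-cycle with that fixed point set; a commutator of two elements
of this normalizer centralizes the `p`-cycle and induces a 3-cycle on its fixed points, so its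
`p`-th power moves three points only. In degree `55` with `p = 47` and `f = 8`, where `n - p = f`,
the order of `G` has to be used again to obtain `f`-transitivity.
-/

open Finset

/-- Transformations of a set `α`, composed left-to-right (acting on the right):
`x (a * b) = (x a) b`. -/
structure Transf (α : Type*) where
  toFun : α → α

namespace Transf

variable {α : Type*}

instance : Semigroup (Transf α) where
  mul a b := ⟨fun x => b.toFun (a.toFun x)⟩
  mul_assoc _ _ _ := rfl

/-- The transformation induced by a permutation. -/
def ofPerm (g : Equiv.Perm α) : Transf α := ⟨g⟩

/-- The rank of a transformation: the cardinality of its image. -/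
noncomputable def rank (a : Transf α) : ℕ := Set.ncard (Set.range a.toFun)

end Transf

/-- The subsemigroup `⟨G, a⟩` generated by `G ∪ {a}`. -/
def genGA {α : Type*} (G : Subgroup (Equiv.Perm α)) (a : Transf α) :
    Subsemigroup (Transf α) :=
  Subsemigroup.closure (insert a (Transf.ofPerm '' (G : Set (Equiv.Perm α))))

/-- The set `⟨G, a⟩ ∖ G`. -/
def genGAminusG {α : Type*} (G : Subgroup (Equiv.Perm α)) (a : Transf α) :
    Set (Transf α) :=
  (genGA G a : Set (Transf α)) \ (Transf.ofPerm '' (G : Set (Equiv.Perm α)))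

/-- The set of conjugates `a^g = g⁻¹ a g` with `g ∈ G`. -/
def conjSet {α : Type*} (G : Subgroup (Equiv.Perm α)) (a : Transf α) : Set (Transf α) :=
  (fun g : Equiv.Perm α => Transf.ofPerm g⁻¹ * a * Transf.ofPerm g) '' (G : Set (Equiv.Perm α))

/-- The subsemigroup `⟨a^g | g ∈ G⟩`. -/
def genConj {α : Type*} (G : Subgroup (Equiv.Perm α)) (a : Transf α) :
    Subsemigroup (Transf α) :=
  Subsemigroup.closure (conjSet G a)

/-- A subset of the transformation semigroup is regular if every element `u` of it
admits `v` in the set with `u = u v u`. -/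
def IsRegularSet {α : Type*} (S : Set (Transf α)) : Prop :=
  ∀ u ∈ S, ∃ v ∈ S, u * v * u = u

/-- A subset of the transformation semigroup is idempotent generated if it coincides with
the subsemigroup generated by its idempotent elements. -/
def IsIdemGen {α : Type*} (S : Set (Transf α)) : Prop :=
  S = ↑(Subsemigroup.closure {u | u ∈ S ∧ u * u = u})

/-- `T` is a transversal for the partition `P`: it meets each class in exactly one point. -/
def IsTransversal {α : Type*} [DecidableEq α] [Fintype α] (T : Finset α)
    (P : Finpartition (Finset.univ : Finset α)) : Prop :=
  ∀ p ∈ P.parts, (T ∩ p).card = 1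

/-- The universal transversal property: for every subset `I` and every partition `P`
with exactly `|I|` classes, some `G`-translate of `I` is a transversal for `P`. -/
def HasUTP {α : Type*} [DecidableEq α] [Fintype α] (G : Subgroup (Equiv.Perm α)) : Prop :=
  ∀ (I : Finset α) (P : Finpartition (Finset.univ : Finset α)),
    P.parts.card = I.card → ∃ g ∈ G, IsTransversal (I.image ⇑g) P

section

open Equiv MulAction
open scoped Pointwise commutatorElement

/-! ### Primitive groups with the universal transversal property -/

section

variable {α : Type*} [Fintype α] [DecidableEq α] {G : Subgroup (Perm α)}

/-- The translates of a nonempty block form an invariant partition. -/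
theorem isPreprimitive_of_partitions (htrans : ∀ x y : α, ∃ g ∈ G, g x = y)
    (hprim : ∀ P : Finpartition (univ : Finset α),
      (∀ g ∈ G, ∀ p ∈ P.parts, p.image ⇑g ∈ P.parts) →
        P.parts.card = 1 ∨ ∀ p ∈ P.parts, p.card = 1) :
    IsPreprimitive G α := by
  classical
  have : IsPretransitive G α := ⟨fun x y => by simpa [Subgroup.smul_def] using htrans x y⟩
  refine ⟨fun {B} hB => ?_⟩
  rcases B.eq_empty_or_nonempty with rfl | hBne
  · exact .inl Set.subsingleton_empty
  obtain ⟨⟨-, hcover⟩, -⟩ := hB.isBlockSystem hBne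
  let P : Finpartition (univ : Finset α) :=
    Finpartition.ofExistsUnique {p | (p : Set α) ∈ Set.range fun g : G => g • B}
      (fun p _ => subset_univ p)
      (fun a _ => by
        obtain ⟨S, ⟨hS, haS⟩, hSuniq⟩ := hcover a
        refine ⟨S.toFinset, ⟨by simpa using hS, by simpa using haS⟩, fun p hp => ?_⟩
        simpa [← Finset.coe_inj] using hSuniq p (by simpa using hp))
      (by simpa using fun _ _ => hBne.ne_empty)
  have mem_parts {p : Finset α} : p ∈ P.parts ↔ ∃ g : G, g • B = p := by
    simp [P, Finpartition.ofExistsUnique]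
  have hBP : B.toFinset ∈ P.parts := mem_parts.2 ⟨1, by simp⟩
  have hinv : ∀ g ∈ G, ∀ p ∈ P.parts, p.image ⇑g ∈ P.parts := by
    intro g hg p hp
    obtain ⟨h, hh⟩ := mem_parts.1 hp
    exact mem_parts.2 ⟨⟨g, hg⟩ * h, by rw [mul_smul, hh, coe_image]; rfl⟩
  rcases hprim P hinv with hone | hsingle
  · refine .inr (Set.eq_univ_of_forall fun x => ?_)
    have hx := card_le_one.1 hone.le _ (P.part_mem.2 (mem_univ x)) _ hBP
    simpa [hx] using P.mem_part (mem_univ x)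
  · obtain ⟨x, hx⟩ := card_eq_one.1 (hsingle _ hBP)
    have hx' : B = {x} := by simpa [← Finset.coe_inj] using hx
    exact .inl (hx' ▸ Set.subsingleton_singleton)

/-- A partition with a set `R` of representatives is encoded by the retraction `c` of `α` onto `R`
that sends each point to the representative of its class. -/
theorem HasUTP.exists_bijOn_of_retraction (hU : HasUTP G) {I R : Finset α} (hcard : #I = #R)
    {c : α → α} (hmem : ∀ x, c x ∈ R) (hfix : ∀ r ∈ R, c r = r) :
    ∃ g ∈ G, Set.BijOn (c ∘ g) I R := by
  let P := Finpartition.ofSetoid (Setoid.ker c)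
  have mem_part {x y : α} : y ∈ P.part x ↔ c x = c y := Finpartition.mem_part_ofSetoid_iff_rel
  have hP : #P.parts = #I := by
    rw [hcard]
    refine (card_bij (fun r _ => P.part r) (fun r _ => P.part_mem.2 (mem_univ r))
      (fun r hr s hs hrs => ?_) fun p hp => ?_).symm
    · have : s ∈ P.part r := hrs ▸ P.mem_part (mem_univ s)
      rwa [mem_part, hfix r hr, hfix s hs] at this
    · obtain ⟨x, hx⟩ := P.nonempty_of_mem_parts hp
      exact ⟨c x, hmem x, P.part_eq_of_mem hp (P.part_eq_of_mem hp hx ▸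
        mem_part.2 (hfix _ (hmem x)).symm)⟩
  obtain ⟨g, hg, htransversal⟩ := hU I P hP
  have hsurj : Set.SurjOn (c ∘ g) I R := by
    intro r hr
    obtain ⟨x, hx⟩ := card_pos.1 ((htransversal _ (P.part_mem.2 (mem_univ r))).symm ▸ one_pos)
    obtain ⟨hxI, hxr⟩ := mem_inter.1 hx
    obtain ⟨i, hi, rfl⟩ := mem_image.1 hxI
    exact ⟨i, hi, (mem_part.1 hxr).symm.trans (hfix r hr)⟩
  have hmaps : Set.MapsTo (c ∘ g) I R := fun i _ => hmem (g i)
  exact ⟨g, hg, hmaps, injOn_of_surjOn_of_card_le _ hmaps hsurj hcard.le, hsurj⟩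

theorem isThreeCycle_commutator {g k : Perm α} {a : α} (h : g.support ∩ k.support = {a}) :
    ⁅g, k⁆.IsThreeCycle := by
  have hinter {x : α} : x ∈ g.support ∧ x ∈ k.support ↔ x = a := by
    rw [← mem_inter, h, mem_singleton]
  obtain ⟨hga, hka⟩ := hinter.2 rfl
  have hsupp : ⁅g, k⁆.support ⊆ {a, g a, k a} := by
    intro x hx
    have hx₁ : x ∈ g.support ∪ (k * g⁻¹ * k⁻¹).support :=
      Perm.support_mul_le g _ (by simpa only [commutatorElement_def, mul_assoc] using hx)
    have hx₂ : x ∈ (g * k * g⁻¹).support ∪ k⁻¹.support := Perm.support_mul_le _ _ hx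
    simp only [Perm.support_conj, Perm.support_inv, mem_union, mem_map,
      Equiv.coe_toEmbedding] at hx₁ hx₂
    grind [Perm.apply_mem_support, Perm.notMem_support]
  have hne : ⁅g, k⁆ ≠ 1 := by
    intro hcomm
    have hgka : g (k a) = k (g a) := by
      simpa using DFunLike.congr_fun (commutatorElement_eq_one_iff_mul_comm.1 hcomm) a
    have hkfix : k (g a) = g a := by
      grind [Perm.apply_mem_support (f := g) (x := a), Perm.notMem_support]
    have hgfix : g (k a) = k a := by
      grind [Perm.apply_mem_support (f := k) (x := a), Perm.notMem_support]
    have := hinter.1 ⟨Perm.apply_mem_support.2 hga,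
      by rw [← hkfix, ← hgka, hgfix]; exact Perm.apply_mem_support.2 hka⟩
    exact Perm.mem_support.1 hga this
  have hnotSwap : ¬ ⁅g, k⁆.IsSwap := by
    intro hswap
    have hsign : Perm.sign ⁅g, k⁆ = 1 := by
      rw [map_commutatorElement, commutatorElement_eq_one_iff_mul_comm, mul_comm]
    exact absurd (hswap.sign_eq ▸ hsign) (by decide)
  have htwo := Perm.two_le_card_support_of_ne_one hne
  have hthree := (card_le_card hsupp).trans card_le_three
  rw [← Perm.card_support_eq_two] at hnotSwap
  exact card_support_eq_three_iff.1 (by omega)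

/-- The transversal property for `S := g.support` and a partition having `S` as a class gives a
conjugate of `g` whose support meets `S` in one point, hence a 3-cycle in `G`. -/
theorem lt_card_support_of_mem (hprim : IsPreprimitive G α) (hA : ¬ alternatingGroup α ≤ G)
    (hU : HasUTP G) {g : Perm α} (hg : g ∈ G) (hg1 : g ≠ 1) :
    Fintype.card α + 1 < 2 * #g.support := by
  by_contra! hle
  set S := g.support
  have hS : 2 ≤ #S := Perm.two_le_card_support_of_ne_one hg1
  obtain ⟨W, hWS, hW⟩ : ∃ W ⊆ Sᶜ, #W = #S - 1 :=
    exists_subset_card_eq (by rw [card_compl]; omega)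
  obtain ⟨w₀, hw₀⟩ : W.Nonempty := card_pos.1 (by omega)
  obtain ⟨s₀, hs₀⟩ : S.Nonempty := card_pos.1 (by omega)
  have hs₀W : s₀ ∉ W := fun h => mem_compl.1 (hWS h) hs₀
  let c : α → α := fun x => if x ∈ S then s₀ else if x ∈ W then x else w₀
  have hcS {x : α} : c x = s₀ ↔ x ∈ S := by grind
  obtain ⟨h, hh, -, hinj, hsurj⟩ := hU.exists_bijOn_of_retraction (I := S) (R := insert s₀ W)
    (c := c) (by grind) (by grind) (fun r hr => by grind [mem_compl])
  obtain ⟨i, hi, hci⟩ := hsurj (mem_insert_self s₀ W)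
  have hinter : S ∩ (h * g * h⁻¹).support = {h i} := by
    rw [Perm.support_conj]
    ext x
    simp only [mem_inter, mem_map, mem_singleton, Equiv.coe_toEmbedding]
    constructor
    · rintro ⟨hx, j, hj, rfl⟩
      exact congrArg h (hinj hj hi ((hcS.2 hx).trans hci.symm))
    · rintro rfl
      exact ⟨hcS.1 hci, i, hi, rfl⟩
  have hconj : h * g * h⁻¹ ∈ G := mul_mem (mul_mem hh hg) (inv_mem hh)
  exact hA (Perm.alternatingGroup_le_of_isPreprimitive_of_isThreeCycle_mem hprim
    (isThreeCycle_commutator hinter)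
    (mul_mem (mul_mem (mul_mem hg hconj) (inv_mem hg)) (inv_mem hconj)))

end

/-! ### Pointwise stabilizers -/

section PtStab

variable {α : Type*} {G : Subgroup (Perm α)} {A B : Finset α} {g k : Perm α} {x y z : α}

/-- The pointwise stabilizer `G_(A)` of the finite set `A` in the permutation group `G`, as a
subgroup of `Perm α`, so that the stabilizers of different sets can be compared. -/
def ptStab (G : Subgroup (Perm α)) (A : Finset α) : Subgroup (Perm α) :=
  G ⊓ fixingSubgroup (Perm α) (A : Set α)

theorem mem_ptStab : g ∈ ptStab G A ↔ g ∈ G ∧ ∀ a ∈ A, g a = a := by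
  simp [ptStab, mem_fixingSubgroup_iff]

theorem ptStab_le : ptStab G A ≤ G := inf_le_left

theorem ptStab_empty : ptStab G ∅ = G := by ext; simp [mem_ptStab]

theorem ptStab_anti (hAB : A ⊆ B) : ptStab G B ≤ ptStab G A :=
  inf_le_inf_left G (fixingSubgroup_antitone _ _ (coe_subset.2 hAB))

theorem ptStab_ne_bot_anti (hAB : A ⊆ B) (h : ptStab G B ≠ ⊥) : ptStab G A ≠ ⊥ :=
  ne_bot_of_le_ne_bot h (ptStab_anti hAB)

/-- `x` and `y` lie in the same orbit of the pointwise stabilizer of `A`. The points of `A` itself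
form singleton orbits. -/
def SameOrbit (G : Subgroup (Perm α)) (A : Finset α) (x y : α) : Prop :=
  ∃ g ∈ ptStab G A, g x = y

theorem sameOrbit_iff_mem_orbit : SameOrbit G A x y ↔ y ∈ orbit (ptStab G A) x := by
  simp [SameOrbit, mem_orbit_iff, Subgroup.smul_def]

namespace SameOrbit

theorem refl (x : α) : SameOrbit G A x x := ⟨1, one_mem _, rfl⟩

theorem symm (h : SameOrbit G A x y) : SameOrbit G A y x := by
  obtain ⟨g, hg, rfl⟩ := h
  exact ⟨g⁻¹, inv_mem hg, g.symm_apply_apply x⟩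

theorem trans (hxy : SameOrbit G A x y) (hyz : SameOrbit G A y z) : SameOrbit G A x z := by
  obtain ⟨g, hg, rfl⟩ := hxy
  obtain ⟨k, hk, rfl⟩ := hyz
  exact ⟨k * g, mul_mem hk hg, rfl⟩

theorem mono (hAB : A ⊆ B) (h : SameOrbit G B x y) : SameOrbit G A x y :=
  h.imp fun _ hg => hg.imp_left (ptStab_anti hAB ·)

theorem notMem (h : SameOrbit G A x y) (hx : x ∉ A) : y ∉ A := by
  obtain ⟨g, hg, rfl⟩ := h
  intro hgx
  exact hx (g.injective ((mem_ptStab.1 hg).2 _ hgx) ▸ hgx)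

end SameOrbit

variable [DecidableEq α]

theorem SameOrbit.of_insert (h : SameOrbit G (insert z A) x y) : SameOrbit G A x y :=
  h.mono (subset_insert _ _)

theorem mem_ptStab_insert : g ∈ ptStab G (insert x A) ↔ g ∈ ptStab G A ∧ g x = x := by
  simp only [mem_ptStab, forall_mem_insert]
  tauto

theorem ptStab_insert_eq_map :
    ptStab G (insert x A) = (stabilizer (ptStab G A) x).map (ptStab G A).subtype := by
  ext g
  simp [mem_ptStab_insert, Subgroup.smul_def, and_comm]

theorem ptStab_insert_ne_bot_iff :
    ptStab G (insert x A) ≠ ⊥ ↔ stabilizer (ptStab G A) x ≠ ⊥ := by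
  rw [ptStab_insert_eq_map, Ne, (stabilizer (ptStab G A) x).map_eq_bot_iff_of_injective
    (Subgroup.subtype_injective _)]

theorem mem_ptStab_image (hk : k ∈ G) : g ∈ ptStab G (A.image k) ↔ k⁻¹ * g * k ∈ ptStab G A := by
  simp only [mem_ptStab, forall_mem_image, Perm.mul_apply, Perm.inv_eq_iff_eq,
    G.mul_mem_cancel_right hk, G.mul_mem_cancel_left (inv_mem hk)]

theorem ptStab_image_mono (hk : k ∈ G) (h : ptStab G A ≤ ptStab G B) :
    ptStab G (A.image k) ≤ ptStab G (B.image k) := fun g hg => by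
  rw [mem_ptStab_image hk] at hg ⊢
  exact h hg

theorem ptStab_image_ne_bot (hk : k ∈ G) (h : ptStab G A ≠ ⊥) : ptStab G (A.image k) ≠ ⊥ := by
  obtain ⟨⟨g, hg⟩, hg1⟩ := Subgroup.ne_bot_iff_exists_ne_one.1 h
  refine Subgroup.ne_bot_iff_exists_ne_one.2 ⟨⟨k * g * k⁻¹, ?_⟩, ?_⟩
  · simpa [mem_ptStab_image hk, mul_assoc] using hg
  · simpa [Subtype.ext_iff, mul_inv_eq_one] using hg1

theorem image_eq_self_of_mem_ptStab (hg : g ∈ ptStab G A) : A.image g = A := by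
  rw [image_congr (mem_ptStab.1 hg).2]
  exact image_id

theorem SameOrbit.image (h : SameOrbit G A x y) (hk : k ∈ G) :
    SameOrbit G (A.image k) (k x) (k y) := by
  obtain ⟨g, hg, rfl⟩ := h
  exact ⟨k * g * k⁻¹, by simpa [mem_ptStab_image hk, mul_assoc] using hg, by simp⟩

theorem ncard_orbit_mul_card_ptStab_insert (G : Subgroup (Perm α)) (A : Finset α) (x : α) :
    (orbit (ptStab G A) x).ncard * Nat.card (ptStab G (insert x A)) = Nat.card (ptStab G A) := by
  rw [ptStab_insert_eq_map, Subgroup.card_subtype, ← index_stabilizer, Subgroup.index_mul_card]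

theorem SameOrbit.card_ptStab_insert_eq [Finite α] (h : SameOrbit G A x y) :
    Nat.card (ptStab G (insert x A)) = Nat.card (ptStab G (insert y A)) := by
  have hx := ncard_orbit_mul_card_ptStab_insert G A x
  have hxy := orbit_eq_iff.2 (sameOrbit_iff_mem_orbit.1 h)
  rw [← ncard_orbit_mul_card_ptStab_insert G A y, hxy] at hx
  exact Nat.eq_of_mul_eq_mul_left ((Set.ncard_pos).2 (nonempty_orbit x)) hx

variable [Fintype α]

theorem HasUTP.choose_le_card_mul (hU : HasUTP G) {r : ℕ} (hr : r < Fintype.card α) :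
    (Fintype.card α).choose r ≤ Nat.card G * (r + 1) := by
  classical
  obtain ⟨I, -, hI⟩ := exists_subset_card_eq (s := (univ : Finset α)) (n := r + 1)
    (by rwa [card_univ])
  -- every `r`-set lies in a translate of `I`: partition `α` into its points and the rest
  have hcover : powersetCard r univ ⊆
      (univ : Finset G).biUnion fun g => powersetCard r (I.image g.1) := by
    intro A hA
    obtain ⟨-, hAr⟩ := mem_powersetCard.1 hA
    obtain ⟨b, hb⟩ : ∃ b, b ∉ A := by
      by_contra! h
      rw [eq_univ_of_forall h, card_univ] at hAr
      omega
    obtain ⟨g, hg, -, -, hsurj⟩ := hU.exists_bijOn_of_retraction (I := I) (R := insert b A)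
      (c := fun x => if x ∈ A then x else b) (by rw [card_insert_of_notMem hb]; omega)
      (by grind) (by grind)
    have hAI : A ⊆ I.image g := fun a ha => by
      obtain ⟨i, hi, hia⟩ := hsurj (mem_insert_of_mem ha)
      grind
    exact mem_biUnion.2 ⟨⟨g, hg⟩, mem_univ _, mem_powersetCard.2 ⟨hAI, hAr⟩⟩
  calc (Fintype.card α).choose r = #(powersetCard r (univ : Finset α)) := by
        rw [card_powersetCard, card_univ]
    _ ≤ ∑ g : G, #(powersetCard r (I.image g.1)) := (card_le_card hcover).trans card_biUnion_le
    _ = Nat.card G * (r + 1) := by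
        simp [card_powersetCard, card_image_of_injective, Equiv.injective, hI]

end PtStab

theorem card_le_descFactorial_mul_card_ptStab {α : Type*} [Fintype α]
    (G : Subgroup (Perm α)) (A : Finset α) :
    Nat.card G ≤ (Fintype.card α).descFactorial #A * Nat.card (ptStab G A) := by
  classical
  induction A using Finset.induction_on with
  | empty => simp [ptStab_empty]
  | insert x A hx ih =>
    have horbit : (orbit (ptStab G A) x).ncard ≤ Fintype.card α - #A := by
      rw [← card_compl, ← Set.ncard_coe_finset]
      refine Set.ncard_le_ncard fun y hy => ?_
      simpa using (sameOrbit_iff_mem_orbit.2 hy).notMem hx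
    calc Nat.card G
        ≤ (Fintype.card α).descFactorial #A * Nat.card (ptStab G A) := ih
      _ = (orbit (ptStab G A) x).ncard * (Fintype.card α).descFactorial #A *
            Nat.card (ptStab G (insert x A)) := by
          rw [← ncard_orbit_mul_card_ptStab_insert G A x]; ring
      _ ≤ _ := by
          rw [card_insert_of_notMem hx, Nat.descFactorial_succ]
          gcongr

section Orbits

variable {H X : Type*} [Group H] [MulAction H X]

theorem sum_card_fixedBy_orbit [Fintype H] (x : X) :
    ∑ h : H, Nat.card (fixedBy (orbit H x) h) = Nat.card H := by
  classical
  have : Finite (orbit H x) := Set.finite_range _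
  have : Fintype (orbit H x) := .ofFinite _
  have : Fintype (orbitRel.Quotient H (orbit H x)) := .ofFinite _
  have : Nonempty (orbit H x) := (nonempty_orbit x).to_subtype
  have hone : Fintype.card (orbitRel.Quotient H (orbit H x)) = 1 :=
    Fintype.card_eq_one_iff_nonempty_unique.2
      ((pretransitive_iff_unique_quotient_of_nonempty H (orbit H x)).1 inferInstance)
  simpa [hone] using sum_card_fixedBy_eq_card_orbits_mul_card_group H (orbit H x)

theorem two_mul_card_orbit_le [Finite H] {x : X} (hx : stabilizer H x ≠ ⊥) :
    2 * Nat.card (orbit H x) ≤ Nat.card H := by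
  rw [Nat.card_coe_set_eq, ← index_stabilizer, ← (stabilizer H x).index_mul_card, mul_comm]
  gcongr
  exact (Subgroup.one_lt_card_iff_ne_bot _).2 hx

/-- By Burnside's lemma for the orbits of `x` and `y`: if these were distinct, the identity would
fix at most `|H|` points of their union and every other element at most one, but the total is
`2 |H|`. -/
theorem mem_orbit_of_stabilizer_ne_bot [Finite H]
    {S : Set X} (hS : ∀ h : H, ∀ x ∈ S, h • x ∈ S)
    (hfix : ∀ h : H, h ≠ 1 → ∀ x ∈ S, ∀ y ∈ S, h • x = x → h • y = y → x = y) {x y : X}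
    (hx : x ∈ S) (hy : y ∈ S) (hxne : stabilizer H x ≠ ⊥) (hyne : stabilizer H y ≠ ⊥) :
    y ∈ orbit H x := by
  classical
  by_contra hxy
  have := Fintype.ofFinite H
  have (z : X) : Finite (orbit H z) := Set.finite_range _
  have fixed_le (h : H) (hh : h ≠ 1) :
      Nat.card (fixedBy (orbit H x) h) + Nat.card (fixedBy (orbit H y) h) ≤ 1 := by
    have hS' {u a : X} (hu : u ∈ S) (ha : a ∈ orbit H u) : a ∈ S := by
      obtain ⟨k, rfl⟩ := ha
      exact hS k u hu
    rw [← Nat.card_sum, Finite.card_le_one_iff_subsingleton]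
    refine ⟨?_⟩
    rintro (⟨⟨a, ha⟩, hha⟩ | ⟨⟨a, ha⟩, hha⟩) (⟨⟨b, hb⟩, hhb⟩ | ⟨⟨b, hb⟩, hhb⟩) <;>
      obtain rfl := hfix h hh a (hS' ‹_› ha) b (hS' ‹_› hb) (congrArg Subtype.val hha)
        (congrArg Subtype.val hhb)
    · rfl
    · exact absurd ((orbit_eq_iff.2 hb).symm.trans (orbit_eq_iff.2 ha)) (mt orbit_eq_iff.1 hxy)
    · exact absurd ((orbit_eq_iff.2 ha).symm.trans (orbit_eq_iff.2 hb)) (mt orbit_eq_iff.1 hxy)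
    · rfl
  have htotal : ∑ h : H, (Nat.card (fixedBy (orbit H x) h) + Nat.card (fixedBy (orbit H y) h)) =
      2 * Nat.card H := by
    rw [sum_add_distrib, sum_card_fixedBy_orbit, sum_card_fixedBy_orbit, two_mul]
  have hone (z : X) : Nat.card (fixedBy (orbit H z) (1 : H)) = Nat.card (orbit H z) := by
    simp [fixedBy]
  have hrest := sum_le_card_nsmul (univ.erase (1 : H)) _ 1 fun h hh =>
    fixed_le h (ne_of_mem_erase hh)
  rw [card_erase_of_mem (mem_univ _), card_univ, ← Nat.card_eq_fintype_card, smul_eq_mul,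
    mul_one] at hrest
  rw [← add_sum_erase _ _ (mem_univ 1), hone, hone] at htotal
  have := two_mul_card_orbit_le hxne
  have := two_mul_card_orbit_le hyne
  have := Nat.card_pos (α := H)
  omega

end Orbits

/-! ### Two orbits outside a set with `f - 2` points -/

section

/-- A transitive group `G` with the universal transversal property and fixity `f`: some nonidentity
element fixes `f` points and none fixes more. The bound on `f` is that of
`lt_card_support_of_mem`. -/
structure UTPFixity {α : Type*} [Fintype α] [DecidableEq α] (G : Subgroup (Perm α)) (f : ℕ) :
    Prop where
  hasUTP : HasUTP G
  isPretransitive : IsPretransitive G α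
  card_le : ∀ {A : Finset α}, ptStab G A ≠ ⊥ → #A ≤ f
  exists_ptStab_ne_bot : ∃ A : Finset α, #A = f ∧ ptStab G A ≠ ⊥
  two_mul_add_two_le : 2 * f + 2 ≤ Fintype.card α

/-- The pointwise stabilizer of `A` is transitive on the points outside `A`. If this holds for all
sets `A` with fewer than `k` points, then `G` is `k`-transitive. -/
def TransitiveOff {α : Type*} (G : Subgroup (Perm α)) (A : Finset α) : Prop :=
  ∀ ⦃x y⦄, x ∉ A → y ∉ A → SameOrbit G A x y

theorem exists_notMem_of_card_lt {α : Type*} [Fintype α] {A : Finset α} (h : #A < Fintype.card α) :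
    ∃ x, x ∉ A := by
  simpa using exists_mem_notMem_of_card_lt_card (t := univ) (by simpa)

variable {α : Type*} [Fintype α] [DecidableEq α] {G : Subgroup (Perm α)} {f : ℕ} {A B C : Finset α}
  {x y z : α}

namespace UTPFixity

theorem card_le_add_card_support (hG : UTPFixity G f) {g : Perm α} (hg : g ∈ G) (hg1 : g ≠ 1) :
    Fintype.card α ≤ f + #g.support := by
  have hfix : ptStab G g.supportᶜ ≠ ⊥ := fun h =>
    hg1 (Subgroup.mem_bot.1 (h ▸ mem_ptStab.2 ⟨hg, fun x hx => by simpa using hx⟩))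
  have := hG.card_le hfix
  rw [card_compl] at this
  omega

/-- For an `(f-2)`-set `A`, the graph whose edges are the pairs `xy` such that `A + x + y` has
nontrivial pointwise stabilizer has an edge across every cut. -/
theorem exists_edge_of_cut (hG : UTPFixity G f) (hA : #A + 2 = f) {p : α → Prop} (hx : x ∉ A)
    (hy : y ∉ A) (hpx : p x) (hpy : ¬ p y) :
    ∃ u v, u ∉ A ∧ v ∉ A ∧ p u ∧ ¬ p v ∧ ptStab G (insert v (insert u A)) ≠ ⊥ := by
  classical
  obtain ⟨F, hF, hFne⟩ := hG.exists_ptStab_ne_bot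
  let c : α → α := fun z => if z ∈ A then z else if p z then x else y
  obtain ⟨g, hg, -, -, hsurj⟩ := hG.hasUTP.exists_bijOn_of_retraction (I := F)
    (R := insert y (insert x A)) (c := c) (by grind) (by grind) (by grind)
  obtain ⟨i, hi, hci⟩ := hsurj (mem_insert_of_mem (mem_insert_self x A))
  obtain ⟨j, hj, hcj⟩ := hsurj (mem_insert_self y _)
  refine ⟨g i, g j, by grind, by grind, by grind, by grind,
    ptStab_ne_bot_anti ?_ (ptStab_image_ne_bot hg hFne)⟩
  intro a ha
  rw [mem_insert, mem_insert] at ha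
  rcases ha with rfl | rfl | ha
  · exact mem_image_of_mem g hj
  · exact mem_image_of_mem g hi
  · obtain ⟨k, hk, hck⟩ := hsurj (mem_insert_of_mem (mem_insert_of_mem ha))
    exact mem_image.2 ⟨k, hk, by grind⟩

/-- Use the cut isolating a point of `B`. -/
theorem exists_ptStab_insert_ne_bot (hG : UTPFixity G f) (hB : #B + 1 = f) (hf : 2 ≤ f) :
    ∃ x, x ∉ B ∧ ptStab G (insert x B) ≠ ⊥ := by
  have := hG.two_mul_add_two_le
  obtain ⟨b, hb⟩ : B.Nonempty := card_pos.1 (by omega)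
  obtain ⟨y, hy⟩ := exists_notMem_of_card_lt (A := B) (by omega)
  obtain ⟨u, v, hu, hv, rfl, hvb, hne⟩ := hG.exists_edge_of_cut (A := B.erase b) (p := (· = b))
    (by grind) (notMem_erase b B) (y := y) (by grind) rfl (by grind)
  exact ⟨v, by grind, by rwa [insert_erase hb] at hne⟩

theorem sameOrbit_of_ptStab_insert_ne_bot (hG : UTPFixity G f) (hB : #B + 1 = f) (hx : x ∉ B)
    (hy : y ∉ B) (hxne : ptStab G (insert x B) ≠ ⊥) (hyne : ptStab G (insert y B) ≠ ⊥) :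
    SameOrbit G B x y := by
  rw [sameOrbit_iff_mem_orbit]
  refine mem_orbit_of_stabilizer_ne_bot (S := {z | z ∉ B})
    (fun (g : ptStab G B) z hz => SameOrbit.notMem ⟨g, g.2, rfl⟩ hz) ?_ hx hy
    (ptStab_insert_ne_bot_iff.1 hxne) (ptStab_insert_ne_bot_iff.1 hyne)
  intro g hg1 u hu v hv hgu hgv
  by_contra huv
  have hg : g.1 ∈ ptStab G (insert u (insert v B)) :=
    mem_ptStab_insert.2 ⟨mem_ptStab_insert.2 ⟨g.2, hgv⟩, hgu⟩
  have hle := hG.card_le fun hbot => hg1 (Subtype.ext (Subgroup.mem_bot.1 (hbot ▸ hg)))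
  rw [card_insert_of_notMem (by grind), card_insert_of_notMem hv] at hle
  omega

theorem sameOrbit_of_edges (hG : UTPFixity G f) (hA : #A + 2 = f) {u v w t : α} (hu : u ∉ A)
    (hv : v ∉ insert u A) (huv : ptStab G (insert v (insert u A)) ≠ ⊥) (ht : t ∉ insert w A)
    (hwt : ptStab G (insert t (insert w A)) ≠ ⊥) (h : SameOrbit G A u w) : SameOrbit G A v t := by
  obtain ⟨g, hg, rfl⟩ := h.symm
  have hgA := image_eq_self_of_mem_ptStab hg
  have hne := ptStab_image_ne_bot (ptStab_le hg) hwt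
  have hgt : g t ∉ (insert w A).image g := by rwa [g.injective.mem_finset_image]
  rw [image_insert, image_insert, hgA] at hne
  rw [image_insert, hgA] at hgt
  exact (hG.sameOrbit_of_ptStab_insert_ne_bot (by rw [card_insert_of_notMem hu]; omega) hv hgt
    huv hne).of_insert.trans (SameOrbit.symm ⟨g, hg, rfl⟩)

/-- As there is an edge across every cut, the orbits of the ends of an edge cover the complement
of `A`. -/
theorem sameOrbit_or_sameOrbit (hG : UTPFixity G f) (hA : #A + 2 = f) (hx : x ∉ A)
    (hy : y ∉ insert x A) (hxy : ptStab G (insert y (insert x A)) ≠ ⊥) (hz : z ∉ A) :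
    SameOrbit G A x z ∨ SameOrbit G A y z := by
  by_contra hnot
  obtain ⟨u, v, hu, hv, hpu, hpv, huv⟩ := hG.exists_edge_of_cut hA
    (p := fun w => SameOrbit G A x w ∨ SameOrbit G A y w) hx hz (.inl (.refl x)) hnot
  have hvu : v ∉ insert u A := by grind
  apply hpv
  rcases hpu with hpu | hpu
  · exact .inr (hG.sameOrbit_of_edges hA hx hy hxy hvu huv hpu)
  · rw [insert_comm] at hxy
    exact .inl (hG.sameOrbit_of_edges hA (by grind) (by grind) hxy hvu huv hpu)

theorem transitiveOff_of_edge (hG : UTPFixity G f) (hA : #A + 2 = f) (hx : x ∉ A)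
    (hy : y ∉ insert x A) (hne : ptStab G (insert y (insert x A)) ≠ ⊥) (hxy : SameOrbit G A x y) :
    TransitiveOff G A := by
  have hx_all {z : α} (hz : z ∉ A) : SameOrbit G A x z :=
    (hG.sameOrbit_or_sameOrbit hA hx hy hne hz).elim id hxy.trans
  exact fun u v hu hv => (hx_all hu).symm.trans (hx_all hv)

theorem two_orbits_of_card_add_two_eq (hG : UTPFixity G f) (hA : #A + 2 = f) {u v w : α}
    (hu : u ∉ A) (hv : v ∉ A) (hw : w ∉ A) :
    SameOrbit G A u v ∨ SameOrbit G A u w ∨ SameOrbit G A v w := by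
  have := hG.two_mul_add_two_le
  obtain ⟨x, hx⟩ := exists_notMem_of_card_lt (A := A) (by omega)
  obtain ⟨y, hy, hne⟩ := hG.exists_ptStab_insert_ne_bot (B := insert x A)
    (by rw [card_insert_of_notMem hx]; omega) (by omega)
  have hcover {z : α} (hz : z ∉ A) := hG.sameOrbit_or_sameOrbit hA hx hy hne hz
  have := hcover hu
  have := hcover hv
  have := hcover hw
  grind [SameOrbit.symm, SameOrbit.trans]

end UTPFixity

end

/-! ### Multiple transitivity -/

/-- The pointwise stabilizer of `C` is transitive on the points outside `C`, up to one exception.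
Unlike transitivity, this passes from the sets `C + x` to `C`. -/
def AlmostTransitiveOff {α : Type*} (G : Subgroup (Perm α)) (C : Finset α) : Prop :=
  ∃ e, ∀ ⦃x y⦄, x ∉ C → y ∉ C → x ≠ e → y ≠ e → SameOrbit G C x y

section MultiplyTransitive

variable {α : Type*} {G : Subgroup (Perm α)} {A C : Finset α} {x y : α}

theorem exists_eqOn_of_forall_transitiveOff {k : ℕ}
    (h : ∀ C : Finset α, #C < k → TransitiveOff G C) {T : Finset α} (hT : #T ≤ k) (σ : Perm α) :
    ∃ g ∈ G, ∀ x ∈ T, g x = σ x := by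
  classical
  induction T using Finset.induction_on with
  | empty => exact ⟨1, one_mem _, by simp⟩
  | insert x T hx ih =>
    rw [card_insert_of_notMem hx] at hT
    obtain ⟨g, hg, hgT⟩ := ih (by omega)
    have hσx : σ x ∉ T.image σ := by rwa [σ.injective.mem_finset_image]
    have hgx : g x ∉ T.image σ := by
      rwa [← image_congr fun y hy => hgT y hy, g.injective.mem_finset_image]
    obtain ⟨k, hk, hkx⟩ := h (T.image σ)
      (by rw [card_image_of_injective _ σ.injective]; omega) hgx hσx
    refine ⟨k * g, mul_mem (ptStab_le hk) hg, forall_mem_insert _ _ _ |>.2 ⟨hkx, fun y hy => ?_⟩⟩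
    rw [Perm.mul_apply, hgT y hy, (mem_ptStab.1 hk).2 _ (mem_image_of_mem σ hy)]

variable [DecidableEq α]

theorem TransitiveOff.image {g : Perm α} (h : TransitiveOff G A) (hg : g ∈ G) :
    TransitiveOff G (A.image g) := by
  have hmem {x : α} (hx : x ∉ A.image g) : g⁻¹ x ∉ A := fun hgx =>
    hx (mem_image.2 ⟨_, hgx, g.apply_symm_apply x⟩)
  intro x y hx hy
  simpa using (h (hmem hx) (hmem hy)).image hg

theorem AlmostTransitiveOff.transitiveOff_or_fixed (h : AlmostTransitiveOff G C) :
    TransitiveOff G C ∨ ∃ y ∉ C, (∀ g ∈ ptStab G C, g y = y) ∧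
      ∀ ⦃u v⦄, u ∉ insert y C → v ∉ insert y C → SameOrbit G C u v := by
  obtain ⟨y, hy⟩ := h
  by_cases hfix : y ∉ C ∧ ∀ g ∈ ptStab G C, g y = y
  · exact .inr ⟨y, hfix.1, hfix.2, fun u v hu hv => by grind⟩
  have hmeet {u : α} (hu : u ∉ C) : ∃ v, v ∉ C ∧ v ≠ y ∧ SameOrbit G C u v := by
    rcases eq_or_ne u y with rfl | huy
    · push Not at hfix
      obtain ⟨g, hg, hgy⟩ := hfix hu
      exact ⟨g u, SameOrbit.notMem ⟨g, hg, rfl⟩ hu, hgy, g, hg, rfl⟩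
    · exact ⟨u, hu, huy, .refl u⟩
  refine .inl fun u v hu hv => ?_
  obtain ⟨u', hu', hu'y, huu'⟩ := hmeet hu
  obtain ⟨v', hv', hv'y, hvv'⟩ := hmeet hv
  exact huu'.trans ((hy hu' hv' hu'y hv'y).trans hvv'.symm)

theorem TransitiveOff.ptStab_insert_eq_of_le [Finite α] (h : TransitiveOff G C) (hx : x ∉ C)
    (hy : y ∉ C) (hle : ptStab G (insert x C) ≤ ptStab G (insert y C)) :
    ptStab G (insert x C) = ptStab G (insert y C) :=
  Subgroup.eq_of_le_of_card_ge hle (h hx hy).card_ptStab_insert_eq.ge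

variable [Fintype α]

/-- Compare the stabilizers of `C + x₁` and `C + x₂` for two suitable points `x₁`, `x₂`. -/
theorem AlmostTransitiveOff.of_insert (hC : #C + 5 ≤ Fintype.card α)
    (h : ∀ x, x ∉ C → AlmostTransitiveOff G (insert x C)) : AlmostTransitiveOff G C := by
  obtain ⟨x₁, hx₁⟩ := exists_notMem_of_card_lt (A := C) (by omega)
  obtain ⟨y₁, h₁⟩ := h x₁ hx₁
  obtain ⟨x₂, hx₂⟩ := exists_notMem_of_card_lt (A := C ∪ {x₁, y₁})
    (by grind [card_union_le C {x₁, y₁}, card_le_two (a := x₁) (b := y₁)])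
  obtain ⟨y₂, h₂⟩ := h x₂ (by grind)
  obtain ⟨w, hw⟩ := exists_notMem_of_card_lt (A := C ∪ {x₁, y₁, x₂, y₂})
    (by grind [card_union_le C {x₁, y₁, x₂, y₂},
      card_le_four (a := x₁) (b := y₁) (c := x₂) (d := y₂)])
  have hw_all {u : α} (hu : u ∉ C) (huy : u ≠ y₂) : SameOrbit G C u w := by
    rcases eq_or_ne u x₂ with rfl | hux
    · exact (h₁ (x := u) (y := w) (by grind) (by grind) (by grind) (by grind)).of_insert
    · exact (h₂ (x := u) (y := w) (by grind) (by grind) huy (by grind)).of_insert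
  exact ⟨y₂, fun u v hu hv huy hvy => (hw_all hu huy).trans (hw_all hv hvy).symm⟩

end MultiplyTransitive

namespace UTPFixity

variable {α : Type*} [Fintype α] [DecidableEq α] {G : Subgroup (Perm α)} {f : ℕ} {C : Finset α}
  {x : α}

/-- Each pair from a triple `x`, `y`, `z` such that `C + x + y + z` has nontrivial stabilizer is an
edge over `C` plus the third point, so every further point is in the orbit of two of the three. -/
theorem almostTransitiveOff_of_card_add_three_eq (hG : UTPFixity G f) (hC : #C + 3 = f) :
    AlmostTransitiveOff G C := by
  have := hG.two_mul_add_two_le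
  have edge {u v w : α} (hu : u ∉ C) (hv : v ∉ insert u C) (hw : w ∉ insert v (insert u C))
      (hne : ptStab G (insert w (insert v (insert u C))) ≠ ⊥) {t : α} (ht : t ∉ insert u C) :
      SameOrbit G C v t ∨ SameOrbit G C w t :=
    (hG.sameOrbit_or_sameOrbit (by rw [card_insert_of_notMem hu]; omega) hv hw hne ht).imp
      .of_insert .of_insert
  have almost {u v w : α}
      (hv_or_w : ∀ {t : α}, t ∉ insert u C → SameOrbit G C v t ∨ SameOrbit G C w t)
      (hvw : SameOrbit G C v w) : AlmostTransitiveOff G C := by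
    have hv_all {t : α} (ht : t ∉ insert u C) : SameOrbit G C v t := (hv_or_w ht).elim id hvw.trans
    exact ⟨u, fun s t hs ht hsu htu => (hv_all (by grind)).symm.trans (hv_all (by grind))⟩
  obtain ⟨x, hx⟩ := exists_notMem_of_card_lt (A := C) (by omega)
  obtain ⟨y, hy⟩ := exists_notMem_of_card_lt (A := insert x C)
    (by rw [card_insert_of_notMem hx]; omega)
  have hcard : #(insert y (insert x C)) = #C + 2 := by
    rw [card_insert_of_notMem hy, card_insert_of_notMem hx]
  obtain ⟨z, hz, hne⟩ := hG.exists_ptStab_insert_ne_bot (B := insert y (insert x C)) (by omega)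
    (by omega)
  obtain ⟨w, hw⟩ := exists_notMem_of_card_lt (A := insert z (insert y (insert x C)))
    (by rw [card_insert_of_notMem hz]; omega)
  have hx_edge {t : α} := edge hx hy hz hne (t := t)
  have hy_edge {t : α} := edge (u := y) (v := x) (w := z) (by grind) (by grind) (by grind)
    (by rwa [insert_comm x y]) (t := t)
  have hz_edge {t : α} := edge (u := z) (v := x) (w := y) (by grind) (by grind) (by grind)
    (by rwa [insert_comm x z, insert_comm y z]) (t := t)
  rcases hx_edge (t := w) (by grind) with hyw | hzw
  · rcases hy_edge (t := w) (by grind) with hxw | hzw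
    · exact almost hz_edge (hxw.trans hyw.symm)
    · exact almost hx_edge (hyw.trans hzw.symm)
  · rcases hz_edge (t := w) (by grind) with hxw | hyw
    · exact almost hy_edge (hxw.trans hzw.symm)
    · exact almost hx_edge (hyw.trans hzw.symm)

theorem almostTransitiveOff (hG : UTPFixity G f) (hC : #C + 3 ≤ f) : AlmostTransitiveOff G C := by
  have := hG.two_mul_add_two_le
  obtain ⟨d, hd⟩ := Nat.exists_eq_add_of_le hC
  induction d generalizing C with
  | zero => exact hG.almostTransitiveOff_of_card_add_three_eq hd.symm
  | succ d ih =>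
    refine .of_insert (by omega) fun x hx => ih ?_ ?_ <;> rw [card_insert_of_notMem hx] <;> omega

theorem two_orbits (hG : UTPFixity G f) (hC : #C + 2 ≤ f) {u v w : α} (hu : u ∉ C) (hv : v ∉ C)
    (hw : w ∉ C) : SameOrbit G C u v ∨ SameOrbit G C u w ∨ SameOrbit G C v w := by
  rcases hC.eq_or_lt with hC | hC
  · exact hG.two_orbits_of_card_add_two_eq hC hu hv hw
  · obtain ⟨e, he⟩ := hG.almostTransitiveOff (C := C) (by omega)
    by_cases hue : u = e <;> by_cases hve : v = e <;> grind [SameOrbit.refl]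

/-- If `G_(C+x)` is not transitive, it fixes a point `c(x)`; then `G_(C+x+z)` fixes both `c(x)` and
`c(z)` and hence has at least three orbits. -/
theorem transitiveOff_insert (hG : UTPFixity G f) (hC : #C + 4 ≤ f) (h : TransitiveOff G C)
    (hx : x ∉ C) : TransitiveOff G (insert x C) := by
  have := hG.two_mul_add_two_le
  have hcard : #(insert x C) = #C + 1 := card_insert_of_notMem hx
  refine (hG.almostTransitiveOff (by omega)).transitiveOff_or_fixed.resolve_right ?_
  rintro ⟨y, hy, hfix, hrest⟩
  have hxy : ptStab G (insert x C) = ptStab G (insert y C) :=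
    h.ptStab_insert_eq_of_le hx (by grind) fun g hg =>
      mem_ptStab_insert.2 ⟨(mem_ptStab_insert.1 hg).1, hfix g hg⟩
  obtain ⟨z, hz⟩ := exists_notMem_of_card_lt (A := insert y (insert x C))
    (by rw [card_insert_of_notMem hy]; omega)
  obtain ⟨k, hk, rfl⟩ := h hx (y := z) (by grind)
  have hky : k y ∉ C := SameOrbit.notMem ⟨k, hk, rfl⟩ (by grind)
  have hkxy : ptStab G (insert (k x) C) = ptStab G (insert (k y) C) := by
    have himage (u : α) : (insert u C).image k = insert (k u) C := by
      rw [image_insert, image_eq_self_of_mem_ptStab hk]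
    rw [← himage, ← himage]
    exact (ptStab_image_mono (ptStab_le hk) hxy.le).antisymm
      (ptStab_image_mono (ptStab_le hk) hxy.ge)
  obtain ⟨w, hw⟩ := exists_notMem_of_card_lt (A := C ∪ {x, y, k x, k y})
    (by grind [card_union_le C {x, y, k x, k y},
      card_le_four (a := x) (b := y) (c := k x) (d := k y)])
  have hne : ptStab G (insert x C) ≠ ptStab G (insert (k x) C) := by
    intro heq
    obtain ⟨g, hg, hgw⟩ := hrest hz (v := w) (by grind)
    have := (mem_ptStab_insert.1 (heq ▸ hg)).2
    grind
  have hkyx : k y ≠ x := fun heq => hne (by rw [hkxy, heq])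
  have hkyy : k y ≠ y := fun heq => hne (by rw [hkxy, heq, hxy])
  have hfix_y {g : Perm α} (hg : g ∈ ptStab G (insert (k x) (insert x C))) : g y = y :=
    hfix g (ptStab_anti (subset_insert _ _) hg)
  have hfix_ky {g : Perm α} (hg : g ∈ ptStab G (insert (k x) (insert x C))) : g (k y) = k y := by
    rw [insert_comm] at hg
    exact (mem_ptStab_insert.1 (hkxy ▸ ptStab_anti (subset_insert _ _) hg)).2
  have hky_kx : k y ≠ k x := k.injective.ne (by grind)
  rcases hG.two_orbits (C := insert (k x) (insert x C)) (u := y) (v := k y) (w := w)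
    (by grind) (by grind) (by grind) (by grind) with ⟨g, hg, h⟩ | ⟨g, hg, h⟩ | ⟨g, hg, h⟩
  · exact hkyy (h.symm.trans (hfix_y hg))
  · grind
  · grind

theorem transitiveOff_of_card_add_three_le (hG : UTPFixity G f) (hC : #C + 3 ≤ f) :
    TransitiveOff G C := by
  induction C using Finset.induction_on with
  | empty =>
    intro x y _ _
    obtain ⟨⟨g, hg⟩, rfl⟩ := hG.isPretransitive.exists_smul_eq x y
    exact ⟨g, ptStab_empty.ge hg, rfl⟩
  | insert x C hx ih =>
    rw [card_insert_of_notMem hx] at hC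
    exact hG.transitiveOff_insert (by omega) (ih (by omega)) hx

end UTPFixity

/-! ### Orbits on `(f-1)`-tuples -/

section Orbital

variable {α : Type*} {G : Subgroup (Perm α)} {C T : Finset α} {p q r : α × α} {a u v : α}
  {σ τ ρ : Perm α}

/-- The pairs `p` and `q` lie in the same orbital of the pointwise stabilizer of `C`, i.e. in the
same orbit of its action on pairs. -/
def SameOrbital (G : Subgroup (Perm α)) (C : Finset α) (p q : α × α) : Prop :=
  ∃ g ∈ ptStab G C, g p.1 = q.1 ∧ g p.2 = q.2

namespace SameOrbital

theorem symm (h : SameOrbital G C p q) : SameOrbital G C q p := by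
  obtain ⟨g, hg, h₁, h₂⟩ := h
  exact ⟨g⁻¹, inv_mem hg, by rw [← h₁]; exact g.symm_apply_apply _,
    by rw [← h₂]; exact g.symm_apply_apply _⟩

theorem trans (hpq : SameOrbital G C p q) (hqr : SameOrbital G C q r) : SameOrbital G C p r := by
  obtain ⟨g, hg, hg₁, hg₂⟩ := hpq
  obtain ⟨k, hk, hk₁, hk₂⟩ := hqr
  exact ⟨k * g, mul_mem hk hg, by simp [hg₁, hk₁], by simp [hg₂, hk₂]⟩

theorem swap (h : SameOrbital G C p q) : SameOrbital G C p.swap q.swap :=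
  h.imp fun _ hg => hg.imp_right And.symm

end SameOrbital

/-- The restrictions of `σ` and `τ` to `T` are in the same `G`-orbit. They encode tuples of distinct
points, with entries indexed by `T`. -/
def SameOrbitOn (G : Subgroup (Perm α)) (T : Finset α) (σ τ : Perm α) : Prop :=
  ∃ g ∈ G, ∀ x ∈ T, g (σ x) = τ x

namespace SameOrbitOn

theorem symm (h : SameOrbitOn G T σ τ) : SameOrbitOn G T τ σ := by
  obtain ⟨g, hg, h⟩ := h
  exact ⟨g⁻¹, inv_mem hg, fun x hx => by rw [Perm.inv_eq_iff_eq, h x hx]⟩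

theorem trans (hστ : SameOrbitOn G T σ τ) (hτρ : SameOrbitOn G T τ ρ) : SameOrbitOn G T σ ρ := by
  obtain ⟨g, hg, hg_eq⟩ := hστ
  obtain ⟨k, hk, hk_eq⟩ := hτρ
  exact ⟨k * g, mul_mem hk hg, fun x hx => by rw [Perm.mul_apply, hg_eq x hx, hk_eq x hx]⟩

end SameOrbitOn

variable [DecidableEq α]

theorem sameOrbital_iff_sameOrbit_insert :
    SameOrbital G C (a, u) (a, v) ↔ SameOrbit G (insert a C) u v := by
  simp only [SameOrbital, SameOrbit, mem_ptStab_insert, and_assoc]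

theorem TransitiveOff.exists_sameOrbital [Fintype α] (h : TransitiveOff G C) (ha : a ∉ C)
    (hp : p ∈ Cᶜ.offDiag) : ∃ w ∉ insert a C, SameOrbital G C p (a, w) := by
  simp only [mem_offDiag, mem_compl] at hp
  obtain ⟨g, hg, rfl⟩ := h hp.1 ha
  refine ⟨g p.2, ?_, g, hg, rfl, rfl⟩
  rw [mem_insert, g.injective.eq_iff, not_or]
  exact ⟨hp.2.2.symm, SameOrbit.notMem ⟨g, hg, rfl⟩ hp.2.1⟩

end Orbital

namespace UTPFixity

variable {α : Type*} [Fintype α] [DecidableEq α] {G : Subgroup (Perm α)} {f : ℕ} {C T : Finset α}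
  {p q r : α × α}

theorem sameOrbital_or (hG : UTPFixity G f) (hC : #C + 3 ≤ f) (hp : p ∈ Cᶜ.offDiag)
    (hq : q ∈ Cᶜ.offDiag) (hr : r ∈ Cᶜ.offDiag) :
    SameOrbital G C p q ∨ SameOrbital G C p r ∨ SameOrbital G C q r := by
  have hC_trans := hG.transitiveOff_of_card_add_three_le hC
  obtain ⟨a, ha⟩ : ∃ a, a ∉ C := ⟨p.1, mem_compl.1 (mem_offDiag.1 hp).1⟩
  obtain ⟨u, hu, hpu⟩ := hC_trans.exists_sameOrbital ha hp
  obtain ⟨v, hv, hqv⟩ := hC_trans.exists_sameOrbital ha hq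
  obtain ⟨w, hw, hrw⟩ := hC_trans.exists_sameOrbital ha hr
  have h := hG.two_orbits (C := insert a C) (by rw [card_insert_of_notMem ha]; omega) hu hv hw
  simp only [← sameOrbital_iff_sameOrbit_insert] at h
  exact h.imp (fun h => hpu.trans (h.trans hqv.symm)) <|
    .imp (fun h => hpu.trans (h.trans hrw.symm)) (fun h => hqv.trans (h.trans hrw.symm))

section NotTransitive

variable (hG : UTPFixity G f) (hnot : ∀ A : Finset α, #A + 2 = f → ¬ TransitiveOff G A)
include hG hnot

theorem not_sameOrbital_of_ptStab_ne_bot (hC : #C + 3 = f) {u v w : α} (hu : u ∉ C)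
    (hv : v ∉ insert u C) (hw : w ∉ insert v (insert u C))
    (hne : ptStab G (insert w (insert v (insert u C))) ≠ ⊥) :
    ¬ SameOrbital G C (u, v) (u, w) := by
  have hA : #(insert u C) + 2 = f := by rw [card_insert_of_notMem hu]; omega
  rw [sameOrbital_iff_sameOrbit_insert]
  exact fun h => hnot _ hA (hG.transitiveOff_of_edge hA hv hw hne h)

/-- The sides of a triangle over `C` show that the two orbitals of `G_(C)` are not self-paired. -/
theorem not_sameOrbital_swap (hC : #C + 3 = f) (hp : p ∈ Cᶜ.offDiag) :
    ¬ SameOrbital G C p p.swap := by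
  intro hswap
  obtain ⟨a, b⟩ := p
  have hab := hp
  simp only [mem_offDiag, mem_compl] at hab
  obtain ⟨z, hz, hne⟩ := hG.exists_ptStab_insert_ne_bot (B := insert b (insert a C))
    (by rw [card_insert_of_notMem (by grind), card_insert_of_notMem hab.1]; omega) (by omega)
  have haz : (a, z) ∈ Cᶜ.offDiag := by grind [mem_compl]
  have hbz : (b, z) ∈ Cᶜ.offDiag := by grind [mem_compl]
  have not_at_a := hG.not_sameOrbital_of_ptStab_ne_bot hnot hC (u := a) (v := b) (w := z)
    (by grind) (by grind) (by grind) hne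
  have not_at_b := hG.not_sameOrbital_of_ptStab_ne_bot hnot hC (u := b) (v := a) (w := z)
    (by grind) (by grind) (by grind) (by rwa [insert_comm a b])
  have not_at_z := hG.not_sameOrbital_of_ptStab_ne_bot hnot hC (u := z) (v := a) (w := b)
    (by grind) (by grind) (by grind) (by rwa [insert_comm a z, insert_comm b z])
  rcases hG.sameOrbital_or hC.le hp haz hbz with h | h | h
  · exact not_at_a h
  · exact not_at_b (hswap.symm.trans h)
  · exact not_at_z h.swap

end NotTransitive

theorem exists_eqOn_of_card_add_two_le (hG : UTPFixity G f) (hT : #T + 2 ≤ f) (σ : Perm α) :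
    ∃ g ∈ G, ∀ x ∈ T, g x = σ x :=
  exists_eqOn_of_forall_transitiveOff (k := f - 2)
    (fun _ _ => hG.transitiveOff_of_card_add_three_le (by omega)) (by omega) σ

theorem sameOrbitOn_or (hG : UTPFixity G f) (hT : T.Nonempty) (hTf : #T + 1 ≤ f) (σ τ ρ : Perm α) :
    SameOrbitOn G T σ τ ∨ SameOrbitOn G T σ ρ ∨ SameOrbitOn G T τ ρ := by
  obtain ⟨x, hx⟩ := hT
  have hcard := card_erase_add_one hx
  have exists_fix (σ : Perm α) :
      ∃ σ', SameOrbitOn G T σ σ' ∧ (∀ y ∈ T.erase x, σ' y = y) ∧ σ' x ∉ T.erase x := by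
    obtain ⟨g, hg, hg_eq⟩ := hG.exists_eqOn_of_card_add_two_le (T := (T.erase x).image σ)
      (by rw [card_image_of_injective _ σ.injective]; omega) σ⁻¹
    have hfix (y) (hy : y ∈ T.erase x) : (g * σ) y = y :=
      (hg_eq _ (mem_image_of_mem _ hy)).trans (σ.symm_apply_apply y)
    refine ⟨g * σ, ⟨g, hg, fun _ _ => rfl⟩, hfix, fun hmem => ?_⟩
    rw [(g * σ).injective (hfix _ hmem)] at hmem
    exact notMem_erase x T hmem
  have glue {σ τ : Perm α} (hσ : ∀ y ∈ T.erase x, σ y = y) (hτ : ∀ y ∈ T.erase x, τ y = y)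
      (h : SameOrbit G (T.erase x) (σ x) (τ x)) : SameOrbitOn G T σ τ := by
    obtain ⟨g, hg, hgx⟩ := h
    obtain ⟨hgG, hg⟩ := mem_ptStab.1 hg
    refine ⟨g, hgG, fun y hy => ?_⟩
    rcases eq_or_ne y x with rfl | hyx
    · exact hgx
    · have hy := mem_erase.2 ⟨hyx, hy⟩
      rw [hσ y hy, hτ y hy, hg y hy]
  obtain ⟨σ', hσσ', hσ', hσx⟩ := exists_fix σ
  obtain ⟨τ', hττ', hτ', hτx⟩ := exists_fix τ
  obtain ⟨ρ', hρρ', hρ', hρx⟩ := exists_fix ρ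
  exact (hG.two_orbits (by omega) hσx hτx hρx).imp
    (fun h => hσσ'.trans ((glue hσ' hτ' h).trans hττ'.symm)) <| .imp
    (fun h => hσσ'.trans ((glue hσ' hρ' h).trans hρρ'.symm))
    (fun h => hττ'.trans ((glue hτ' hρ' h).trans hρρ'.symm))

section NotTransitive

variable (hG : UTPFixity G f) (hnot : ∀ A : Finset α, #A + 2 = f → ¬ TransitiveOff G A)
include hG hnot

theorem not_sameOrbitOn_mul_swap (hT : #T + 1 = f) (σ : Perm α) {a b : α} (ha : a ∈ T) (hb : b ∈ T)
    (hab : a ≠ b) : ¬ SameOrbitOn G T σ (σ * swap a b) := by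
  rintro ⟨g, hg, hg_eq⟩
  have hTa := card_erase_add_one ha
  have hTab := card_erase_add_one (mem_erase.2 ⟨hab.symm, hb⟩)
  set C := (T.erase a).erase b
  have hσC {c : α} (hc : c ∉ C) : σ c ∈ (C.image σ)ᶜ := by
    rwa [mem_compl, σ.injective.mem_finset_image]
  refine hG.not_sameOrbital_swap hnot (C := C.image σ) (p := (σ a, σ b))
    (by rw [card_image_of_injective _ σ.injective]; omega)
    (mem_offDiag.2 ⟨hσC (by grind), hσC (by grind), σ.injective.ne hab⟩)
    ⟨g, mem_ptStab.2 ⟨hg, forall_mem_image.2 fun c hc => ?_⟩, ?_, ?_⟩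
  · rw [hg_eq c (by grind), Perm.mul_apply, swap_apply_of_ne_of_ne (by grind) (by grind)]
  · simp [hg_eq a ha]
  · simp [hg_eq b hb]

/-- The two `G`-orbits on `(f-1)`-tuples are interchanged by every transposition of the entries. -/
theorem not_sameOrbitOn_three_swaps (hT : #T + 1 = f) {a b c d e k : α} (ha : a ∈ T) (hb : b ∈ T)
    (hc : c ∈ T) (hd : d ∈ T) (he : e ∈ T) (hk : k ∈ T) (hab : a ≠ b) (hcd : c ≠ d) (hek : e ≠ k) :
    ¬ SameOrbitOn G T 1 (swap a b * swap c d * swap e k) := by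
  intro h
  have not_one := hG.not_sameOrbitOn_mul_swap hnot hT 1 ha hb hab
  have not_two := hG.not_sameOrbitOn_mul_swap hnot hT (swap a b) hc hd hcd
  have not_three := hG.not_sameOrbitOn_mul_swap hnot hT (swap a b * swap c d) he hk hek
  rw [one_mul] at not_one
  rcases hG.sameOrbitOn_or ⟨a, ha⟩ hT.le (swap a b) (swap a b * swap c d)
    (swap a b * swap c d * swap e k) with h' | h' | h'
  · exact not_two h'
  · exact not_one (h.trans h'.symm)
  · exact not_three h'

/-- An involution fixing `C` pointwise would exchange two points outside `C`. -/
theorem odd_orderOf_of_mem_ptStab (hC : #C + 3 = f) {g : Perm α} (hg : g ∈ ptStab G C) :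
    Odd (orderOf g) := by
  by_contra hodd
  have h2 : 2 ∣ orderOf g := (Nat.not_odd_iff_even.1 hodd).two_dvd
  have hu2 := orderOf_pow_orderOf_div (orderOf_pos g).ne' h2
  set u := g ^ (orderOf g / 2)
  have hu : u ∈ ptStab G C := pow_mem hg _
  obtain ⟨hu_sq, hu1⟩ := orderOf_eq_prime_iff.1 hu2
  obtain ⟨x, hx⟩ : ∃ x, u x ≠ x := by
    contrapose! hu1
    exact Equiv.ext hu1
  have hux : u (u x) = x := by rw [← Perm.mul_apply, ← pow_two, hu_sq, Perm.one_apply]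
  have hxC : x ∉ C := fun hxC => hx ((mem_ptStab.1 hu).2 x hxC)
  refine hG.not_sameOrbital_swap hnot hC (p := (x, u x)) ?_ ⟨u, hu, rfl, hux⟩
  simpa [mem_offDiag, hxC, hx.symm] using SameOrbit.notMem ⟨u, hu, rfl⟩ hxC

theorem exists_mul_self_eq_one_eqOn (hC : #C + 3 = f) {σ : Perm α} (hσ : σ * σ = 1)
    (hσC : ∀ x ∈ C, σ x ∈ C) : ∃ h ∈ G, h * h = 1 ∧ ∀ x ∈ C, h x = σ x := by
  obtain ⟨g, hg, hg_eq⟩ := hG.exists_eqOn_of_card_add_two_le (T := C) (by omega) σ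
  have hgg : g * g ∈ ptStab G C := mem_ptStab.2 ⟨mul_mem hg hg, fun x hx => by
    rw [Perm.mul_apply, hg_eq x hx, hg_eq _ (hσC x hx), ← Perm.mul_apply, hσ, Perm.one_apply]⟩
  obtain ⟨m, hm⟩ := hG.odd_orderOf_of_mem_ptStab hnot hC hgg
  refine ⟨g ^ (2 * m + 1), pow_mem hg _, ?_, fun x hx => ?_⟩
  · rw [← hm, ← (Commute.refl g).mul_pow, pow_orderOf_eq_one]
  · rw [pow_succ', pow_mul, pow_two, Perm.mul_apply, (mem_ptStab.1 (pow_mem hgg m)).2 x hx,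
      hg_eq x hx]

/-- An involution inducing `(a b)(c d)` on a set `C` of `f - 3` points moves a further point `x`,
and induces three transpositions on `C + x + h x`. -/
theorem not_eqOn_mul_swap_of_mul_self_eq_one (hC : #C + 3 = f) {h : Perm α} (hh : h ∈ G)
    (hh_sq : h * h = 1) {a b c d : α} (habcd : [a, b, c, d].Nodup) (ha : a ∈ C) (hb : b ∈ C)
    (hc : c ∈ C) (hd : d ∈ C) : ¬ ∀ x ∈ C, h x = (swap a b * swap c d) x := by
  intro hhC
  have h2f := hG.two_mul_add_two_le
  have hhh (x : α) : h (h x) = x := by rw [← Perm.mul_apply, hh_sq, Perm.one_apply]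
  have hσ_fix {x : α} (hx : x ∉ ({a, b, c, d} : Finset α)) : (swap a b * swap c d) x = x := by
    grind [Perm.mul_apply, swap_apply_of_ne_of_ne]
  have hσC (x) (hx : x ∈ C) : (swap a b * swap c d) x ∈ C := by
    simp only [Perm.mul_apply, swap_apply_def]
    split_ifs <;> assumption
  have hh1 : h ≠ 1 := by
    rintro rfl
    have := hhC a ha
    grind [Perm.mul_apply, swap_apply_of_ne_of_ne, swap_apply_left, Perm.one_apply]
  have hfix := hG.card_le_add_card_support hh hh1
  obtain ⟨x, hhx, hx⟩ := exists_mem_notMem_of_card_lt_card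
    (s := {a, b, c, d}) (t := h.support) (card_le_four.trans_lt (by omega))
  rw [Perm.mem_support] at hhx
  have hxC : x ∉ C := fun hxC => hhx ((hhC x hxC).trans (hσ_fix hx))
  have hhxC : h x ∉ C := fun hmem => hxC (by simpa [← hhC _ hmem, hhh] using hσC _ hmem)
  refine hG.not_sameOrbitOn_three_swaps hnot (T := insert x (insert (h x) C))
    (by rw [card_insert_of_notMem (by grind), card_insert_of_notMem hhxC]; omega)
    (a := a) (b := b) (c := c) (d := d) (e := x) (k := h x) (by grind) (by grind) (by grind)
    (by grind) (by grind) (by grind) (by grind) (by grind) hhx.symm ⟨h, hh, ?_⟩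
  simp only [forall_mem_insert, Perm.one_apply, Perm.mul_apply (_ * _), swap_apply_left,
    swap_apply_right, hhh, hσ_fix hx]
  refine ⟨(hσ_fix (by grind)).symm, trivial, fun y hy => ?_⟩
  rw [swap_apply_of_ne_of_ne (by grind) (by grind), hhC y hy]

end NotTransitive

theorem exists_transitiveOff (hG : UTPFixity G f) (hf : 7 ≤ f) :
    ∃ A : Finset α, #A + 2 = f ∧ TransitiveOff G A := by
  by_contra! hnot
  have h2f := hG.two_mul_add_two_le
  obtain ⟨C, -, hC⟩ := exists_subset_card_eq (s := (univ : Finset α)) (n := f - 3)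
    (by rw [card_univ]; omega)
  obtain ⟨a, ha, b, hb, c, hc, hab, hac, hbc⟩ := two_lt_card.1 (show 2 < #C by omega)
  obtain ⟨d, hd, hd_ne⟩ := exists_mem_notMem_of_card_lt_card (s := {a, b, c}) (t := C)
    (by grind [card_le_three (a := a) (b := b) (c := c)])
  have hdisj : Perm.Disjoint (swap a b) (swap c d) := Perm.disjoint_swap_swap (by grind)
  obtain ⟨h, hh, hh_sq, hhC⟩ := hG.exists_mul_self_eq_one_eqOn hnot (C := C) (by omega)
    (σ := swap a b * swap c d)
    (by rw [hdisj.commute.symm.mul_mul_mul_comm, swap_mul_self, swap_mul_self, one_mul])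
    (by grind [Perm.mul_apply])
  exact hG.not_eqOn_mul_swap_of_mul_self_eq_one hnot (by omega) hh hh_sq (by grind) ha hb hc hd hhC

theorem transitiveOff (hG : UTPFixity G f) (hf : 7 ≤ f) (hC : #C + 2 ≤ f) : TransitiveOff G C := by
  rcases hC.lt_or_eq with hC | hC
  · exact hG.transitiveOff_of_card_add_three_le hC
  obtain ⟨A, hA, hA_trans⟩ := hG.exists_transitiveOff hf
  have e : {x // x ∈ A} ≃ {x // x ∈ C} := equivOfCardEq (by omega)
  obtain ⟨g, hg, hgA⟩ := hG.exists_eqOn_of_card_add_two_le hA.le e.extendSubtype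
  have hAC : A.image g = C := by
    refine eq_of_subset_of_card_le (image_subset_iff.2 fun x hx => ?_)
      (by rw [card_image_of_injective _ g.injective]; omega)
    rw [hgA x hx]
    exact e.extendSubtype_mem x hx
  exact hAC ▸ hA_trans.image hg

theorem exists_eqOn (hG : UTPFixity G f) (hf : 7 ≤ f) (hT : #T + 1 ≤ f) (σ : Perm α) :
    ∃ g ∈ G, ∀ x ∈ T, g x = σ x :=
  exists_eqOn_of_forall_transitiveOff (k := f - 1) (fun _ _ => hG.transitiveOff hf (by omega))
    (by omega) σ

end UTPFixity

/-! ### Coprime cycle lengths -/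

section

section PrimePowers

variable {Q : Finset ℕ} {x d N : ℕ}

theorem dvd_of_not_dvd_div_minFac (hx : IsPrimePow x) (hd : d ∣ N) (hxN : x ∣ N)
    (h : ¬ d ∣ N / x.minFac) : x ∣ d := by
  obtain ⟨e, rfl⟩ := hd
  have hp : x.minFac.Prime := Nat.minFac_prime hx.ne_one
  have hpe : ¬ x.minFac ∣ e := by
    rintro ⟨e, rfl⟩
    rw [mul_left_comm, Nat.mul_div_cancel_left _ hp.pos] at h
    exact h (dvd_mul_right d e)
  have hxe : x.Coprime e := by
    rw [← hx.minFac_pow_factorization_eq]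
    exact Nat.Coprime.pow_left _ ((Nat.Prime.coprime_iff_not_dvd hp).2 hpe)
  exact hxe.dvd_of_dvd_mul_right hxN

theorem card_filter_not_dvd_div_minFac_le_one (hQ : ∀ x ∈ Q, IsPrimePow x)
    (hco : (Q : Set ℕ).Pairwise Nat.Coprime) (hQN : ∀ x ∈ Q, x ∣ N) (hdN : d ∣ N)
    (hdQ : d = 1 ∨ ∃ l ∈ Q, d ∣ l) : #{x ∈ Q | ¬ d ∣ N / x.minFac} ≤ 1 := by
  obtain rfl | ⟨l, hl, hdl⟩ := hdQ
  · simp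
  refine (card_le_card (t := {l}) fun x hx => ?_).trans (card_singleton l).le
  obtain ⟨hx, hxd⟩ := mem_filter.1 hx
  by_contra hxl
  exact (hQ x hx).ne_one (Nat.Coprime.eq_one_of_dvd (hco hx hl (by simpa using hxl))
    ((dvd_of_not_dvd_div_minFac (hQ x hx) hdN (hQN x hx) hxd).trans hdl))

theorem card_filter_not_dvd_div_minFac_lt (hQ : ∀ x ∈ Q, IsPrimePow x)
    (hco : (Q : Set ℕ).Pairwise Nat.Coprime) (hQN : ∀ x ∈ Q, x ∣ N) (hdN : d ∣ N) (hd : 0 < d)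
    (hdQ : d < ∏ x ∈ Q, x) : #{x ∈ Q | ¬ d ∣ N / x.minFac} < #Q := by
  refine card_lt_card (filter_ssubset.2 ?_)
  by_contra! h
  refine hdQ.not_ge (Nat.le_of_dvd hd (prod_dvd_of_isRelPrime (fun x hx y hy hxy =>
    Nat.coprime_iff_isRelPrime.1 (hco hx hy hxy)) fun x hx => ?_))
  exact dvd_of_not_dvd_div_minFac (hQ x hx) hdN (hQN x hx) (h x hx)

end PrimePowers

theorem pow_apply_eq_pow_apply {α : Type*} {g σ : Perm α} {T : Finset α} (hσT : ∀ x ∈ T, σ x ∈ T)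
    (hgσ : ∀ x ∈ T, g x = σ x) (m : ℕ) {w : α} (hw : w ∈ T) : (g ^ m) w = (σ ^ m) w := by
  induction m generalizing w with
  | zero => rfl
  | succ m ih => rw [pow_succ, pow_succ, Perm.mul_apply, Perm.mul_apply, hgσ w hw, ih (hσT w hw)]

variable {α : Type*} [Fintype α]

theorem period_add_card_le {g : Perm α} {T : Finset α} (hT : ∀ x ∈ T, g x ∈ T) {w : α}
    (hw : w ∉ T) : period g w + #T ≤ Fintype.card α := by
  classical
  have hdisj : Disjoint (orbit (Subgroup.zpowers g) w).toFinset T := by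
    refine disjoint_left.2 fun y hy hyT => hw ?_
    obtain ⟨⟨_, k, rfl⟩, rfl⟩ := Set.mem_toFinset.1 hy
    obtain ⟨m, hm⟩ := (show g.SameCycle ((g ^ k) w) w from ⟨-k, by simp⟩).exists_nat_pow_eq
    rw [← hm, ← Perm.iterate_eq_pow]
    exact Set.MapsTo.iterate (s := (T : Set α)) hT m hyT
  have hperiod : period g w = #(orbit (Subgroup.zpowers g) w).toFinset :=
    (minimalPeriod_eq_card g w).trans (Set.toFinset_card _).symm
  rw [hperiod, ← card_union_of_disjoint hdisj]
  exact card_le_univ _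

variable [DecidableEq α]

theorem apply_mem_of_support_subset {σ : Perm α} {T : Finset α} (hσ : σ.support ⊆ T) {w : α}
    (hw : w ∈ T) : σ w ∈ T := by
  by_cases h : σ w = w
  · rwa [h]
  · exact hσ (Perm.apply_mem_support.2 (Perm.mem_support.2 h))

theorem period_eq_one_or_dvd_mem_cycleType (σ : Perm α) (w : α) :
    period σ w = 1 ∨ ∃ l ∈ σ.cycleType, period σ w ∣ l := by
  refine or_iff_not_imp_left.2 fun hw => ?_
  rw [period_eq_one_iff, Perm.smul_def] at hw
  refine ⟨#(σ.cycleOf w).support, ?_, ?_⟩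
  · rw [Perm.cycleType_def]
    exact Multiset.mem_map_of_mem _
      (Perm.cycleOf_mem_cycleFactorsFinset_iff.2 (Perm.mem_support.2 hw))
  · rw [← pow_smul_eq_iff_period_dvd, Perm.smul_def, ← (Perm.isCycle_cycleOf σ hw).orderOf,
      ← Perm.cycleOf_pow_apply_self, pow_orderOf_eq_one, Perm.one_apply]

theorem orderOf_dvd_orderOf_of_eqOn {g σ : Perm α} {T : Finset α} (hσT : σ.support ⊆ T)
    (hpow : ∀ (m : ℕ), ∀ w ∈ T, (g ^ m) w = (σ ^ m) w) : orderOf σ ∣ orderOf g := by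
  refine orderOf_dvd_of_pow_eq_one (Perm.ext fun w => ?_)
  by_cases hw : w ∈ T
  · rw [← hpow _ w hw, pow_orderOf_eq_one]
  · exact Perm.pow_apply_eq_self_of_apply_eq_self
      (Perm.notMem_support.1 fun h => hw (hσT h)) _

namespace UTPFixity

variable {G : Subgroup (Perm α)} {f : ℕ} {Q : Finset ℕ}

/-- Let `g` induce on `T` a permutation with cycle type `Q`. -/
theorem exists_dvd_orderOf_and_period_dvd (hG : UTPFixity G f) (hf : 7 ≤ f) (hQ : ∀ x ∈ Q, 2 ≤ x)
    (hsum : ∑ x ∈ Q, x + 1 ≤ f) :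
    ∃ g ∈ G, ∃ T : Finset α, #T + 1 = f ∧ (∀ w ∈ T, g w ∈ T) ∧ (∀ x ∈ Q, x ∣ orderOf g) ∧
      ∀ w ∈ T, period g w = 1 ∨ ∃ l ∈ Q, period g w ∣ l := by
  have h2f := hG.two_mul_add_two_le
  have hval : Q.val.sum = ∑ x ∈ Q, x := (sum_val Q)
  obtain ⟨σ, hσ⟩ := (Perm.exists_with_cycleType_iff α (m := Q.val)).2 ⟨by omega, hQ⟩
  obtain ⟨T, hsT, -, hT⟩ := exists_subsuperset_card_eq (subset_univ σ.support) (n := f - 1)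
    (by rw [← Perm.sum_cycleType, hσ]; omega) (by rw [card_univ]; omega)
  have hσT (w) (hw : w ∈ T) : σ w ∈ T := apply_mem_of_support_subset hsT hw
  obtain ⟨g, hg, hgσ⟩ := hG.exists_eqOn hf (T := T) (by omega) σ
  have hpow (m : ℕ) (w) (hw : w ∈ T) := pow_apply_eq_pow_apply hσT hgσ m hw
  refine ⟨g, hg, T, by omega, fun w hw => hgσ w hw ▸ hσT w hw, fun x hx => ?_, fun w hw => ?_⟩
  · exact (Perm.dvd_of_mem_cycleType (hσ ▸ hx)).trans (orderOf_dvd_orderOf_of_eqOn hsT hpow)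
  · have hperiod (m : ℕ) : period g w ∣ m ↔ period σ w ∣ m := by
      simp only [← pow_smul_eq_iff_period_dvd, Perm.smul_def, hpow m w hw]
    rw [Nat.dvd_right_iff_eq.1 hperiod]
    simpa [hσ] using period_eq_one_or_dvd_mem_cycleType σ w

theorem card_le_add_card_not_period_dvd (hG : UTPFixity G f) {g : Perm α} (hg : g ∈ G) {p : ℕ}
    (hp : p.Prime) (hpg : p ∣ orderOf g) :
    Fintype.card α ≤ f + #{w : α | ¬ period g w ∣ orderOf g / p} := by
  have hpow : g ^ (orderOf g / p) ≠ 1 := pow_ne_one_of_lt_orderOf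
    (Nat.div_pos (Nat.le_of_dvd (orderOf_pos g) hpg) hp.pos).ne'
    (Nat.div_lt_self (orderOf_pos g) hp.one_lt)
  have hsupp : (g ^ (orderOf g / p)).support = ({w | ¬ period g w ∣ orderOf g / p} : Finset α) := by
    ext w
    simp [← pow_smul_eq_iff_period_dvd]
  exact hsupp ▸ hG.card_le_add_card_support (pow_mem hg _) hpow

/-- Let `g` have order `N` and cycle lengths `x ∈ Q` on an `(f-1)`-set `T`. Each of its powers of
prime order `g ^ (N / x.minFac)` moves at least `n - f` points. A point of `T` is moved by at most
one of these powers. A point outside `T` cannot be moved by all of them, since the length of its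
cycle would be a multiple of all `x ∈ Q`. -/
theorem prod_add_le (hG : UTPFixity G f) (hf : 7 ≤ f) (hQ : ∀ x ∈ Q, IsPrimePow x)
    (hco : (Q : Set ℕ).Pairwise Nat.Coprime) (hsum : ∑ x ∈ Q, x + 1 ≤ f)
    (hn : 2 * f + #Q ≤ Fintype.card α + 1) : ∏ x ∈ Q, x + f ≤ Fintype.card α + 1 := by
  by_contra! hprod
  obtain ⟨g, hg, T, hT, hgT, hQg, hTQ⟩ :=
    hG.exists_dvd_orderOf_and_period_dvd hf (fun x hx => (hQ x hx).two_le) hsum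
  let Moves (x : ℕ) (w : α) : Prop := ¬ period g w ∣ orderOf g / x.minFac
  have hmoves (x) (hx : x ∈ Q) : Fintype.card α - f ≤ #{w | Moves x w} :=
    Nat.sub_le_iff_le_add'.2 (hG.card_le_add_card_not_period_dvd hg
      (Nat.minFac_prime (hQ x hx).ne_one) (x.minFac_dvd.trans (hQg x hx)))
  have hin (w) (hw : w ∈ T) : #{x ∈ Q | Moves x w} ≤ 1 :=
    card_filter_not_dvd_div_minFac_le_one hQ hco hQg (period_dvd_orderOf g w) (hTQ w hw)
  have hout (w) (hw : w ∈ Tᶜ) : #{x ∈ Q | Moves x w} ≤ #Q - 1 := by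
    have := period_add_card_le hgT (mem_compl.1 hw)
    have := card_filter_not_dvd_div_minFac_lt hQ hco hQg (period_dvd_orderOf g w)
      (period_pos_of_orderOf_pos (orderOf_pos g) w) (by omega)
    exact Nat.le_sub_one_of_lt this
  have hcount : #Q * (Fintype.card α - f) ≤ #T * 1 + #Tᶜ * (#Q - 1) := by
    calc #Q * (Fintype.card α - f) ≤ ∑ x ∈ Q, #{w | Moves x w} := by
          simpa using card_nsmul_le_sum _ _ _ hmoves
      _ = ∑ w, #{x ∈ Q | Moves x w} := sum_card_bipartiteAbove_eq_sum_card_bipartiteBelow Moves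
      _ = ∑ w ∈ T, #{x ∈ Q | Moves x w} + ∑ w ∈ Tᶜ, #{x ∈ Q | Moves x w} :=
          (sum_add_sum_compl T _).symm
      _ ≤ #T * 1 + #Tᶜ * (#Q - 1) :=
          add_le_add (sum_le_card_nsmul _ _ _ hin) (sum_le_card_nsmul _ _ _ hout)
  obtain ⟨k, hk⟩ : ∃ k, #Q = k + 1 := Nat.exists_eq_add_one.2 <| card_pos.2 <| by
    rw [nonempty_iff_ne_empty]
    rintro rfl
    simp only [prod_empty] at hprod
    omega
  have hTc : #Tᶜ = Fintype.card α - f + 1 := by rw [card_compl]; omega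
  rw [hk, Nat.add_sub_cancel, hTc] at hcount
  have : Fintype.card α - f ≤ #T + k := by linarith
  omega

end UTPFixity

end

/-! ### Order bounds and large degree -/

theorem two_pow_le_succ_mul_choose_half (n : ℕ) : 2 ^ n ≤ (n + 1) * n.choose (n / 2) := by
  rw [← Nat.sum_range_choose]
  refine (sum_le_card_nsmul _ _ _ fun i _ => Nat.choose_le_middle i n).trans_eq ?_
  rw [card_range, smul_eq_mul]

theorem exists_coprime_isPrimePow_le {L : ℕ} (hL : 5 ≤ L) : ∃ x y z : ℕ,
    IsPrimePow x ∧ IsPrimePow y ∧ IsPrimePow z ∧ x.Coprime y ∧ x.Coprime z ∧ y.Coprime z ∧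
      x ≤ L ∧ y ≤ L ∧ z ≤ L ∧ L ^ 3 < 30 * (x * y * z) := by
  have hpow {p : ℕ} (hp : p.Prime) (hpL : p ≤ L) : IsPrimePow (p ^ Nat.log p L) :=
    hp.isPrimePow.pow (Nat.log_pos hp.one_lt hpL).ne'
  have hlt {p : ℕ} (hp : p.Prime) : L < p * p ^ Nat.log p L := by
    simpa [pow_succ'] using Nat.lt_pow_succ_log_self hp.one_lt L
  refine ⟨2 ^ Nat.log 2 L, 3 ^ Nat.log 3 L, 5 ^ Nat.log 5 L, hpow Nat.prime_two (by omega),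
    hpow Nat.prime_three (by omega), hpow Nat.prime_five hL, Nat.Coprime.pow _ _ (by norm_num),
    Nat.Coprime.pow _ _ (by norm_num), Nat.Coprime.pow _ _ (by norm_num),
    Nat.pow_log_le_self 2 (by omega), Nat.pow_log_le_self 3 (by omega),
    Nat.pow_log_le_self 5 (by omega), ?_⟩
  calc L ^ 3 = L * L * L := by ring
    _ < 2 * 2 ^ Nat.log 2 L * (3 * 3 ^ Nat.log 3 L) * (5 * 5 ^ Nat.log 5 L) := by
        gcongr
        exacts [hlt Nat.prime_two, hlt Nat.prime_three, hlt Nat.prime_five]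
    _ = 30 * (2 ^ Nat.log 2 L * 3 ^ Nat.log 3 L * 5 ^ Nat.log 5 L) := by ring

theorem thirty_mul_succ_le_pow {n m L : ℕ} (hm : 11 ≤ m) (hmn : 2 ^ m ≤ n)
    (h : n ≤ (m + 1) * (3 * (L + 2))) : 30 * (n + 1) ≤ L ^ 3 := by
  have hm2 : 14 * (m + 1) ^ 2 ≤ n := by
    refine le_trans ?_ hmn
    clear h hmn
    induction m, hm using Nat.le_induction with
    | base => norm_num
    | succ m hm ih => rw [pow_succ 2]; nlinarith
  have hn : 2048 ≤ n := (Nat.pow_le_pow_right two_pos hm).trans hmn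
  have hL2 : 14 * n ≤ 9 * (L + 2) ^ 2 := by
    refine Nat.le_of_mul_le_mul_right ?_ (show 0 < n by omega)
    calc 14 * n * n ≤ 14 * ((m + 1) * (3 * (L + 2))) ^ 2 := by
          rw [mul_assoc, ← sq]; gcongr
      _ = 14 * (m + 1) ^ 2 * (9 * (L + 2) ^ 2) := by ring
      _ ≤ n * (9 * (L + 2) ^ 2) := Nat.mul_le_mul_right _ hm2
      _ = 9 * (L + 2) ^ 2 * n := mul_comm _ _
  have hL : 55 ≤ L := by nlinarith
  calc 30 * (n + 1) ≤ 55 * L ^ 2 := by nlinarith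
    _ ≤ L ^ 3 := by rw [pow_succ' L 2]; gcongr

namespace UTPFixity

variable {α : Type*} [Fintype α] [DecidableEq α] {G : Subgroup (Perm α)} {f : ℕ}

theorem choose_le_descFactorial (hG : UTPFixity G f) {k : ℕ} (hk : f < k)
    (hkn : k ≤ Fintype.card α) :
    (Fintype.card α).choose (Fintype.card α / 2) ≤
      (Fintype.card α).descFactorial k * (Fintype.card α / 2 + 1) := by
  obtain ⟨A, -, hA⟩ := exists_subset_card_eq (s := (univ : Finset α)) (n := k)
    (by rwa [card_univ])
  have hbot : ptStab G A = ⊥ := by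
    by_contra hne
    have := hG.card_le hne
    omega
  have hcard := card_le_descFactorial_mul_card_ptStab G A
  rw [hbot, Subgroup.card_bot, hA, mul_one] at hcard
  exact (hG.hasUTP.choose_le_card_mul (Nat.div_lt_self (by omega) one_lt_two)).trans
    (Nat.mul_le_mul_right _ hcard)

theorem card_lt_mul (hG : UTPFixity G f) {m : ℕ} (hm : Fintype.card α < 2 ^ (m + 1)) :
    Fintype.card α + 1 < (m + 1) * (f + 3) := by
  have h2f := hG.two_mul_add_two_le
  have hchoose := hG.choose_le_descFactorial f.lt_succ_self (by omega)
  generalize Fintype.card α = n at *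
  have hhalf : n / 2 + 1 ≤ 2 ^ m := by rw [pow_succ] at hm; omega
  have hpow : 2 ^ n < 2 ^ ((m + 1) * (f + 2) + m) := by
    calc 2 ^ n ≤ (n + 1) * n.choose (n / 2) := two_pow_le_succ_mul_choose_half n
      _ ≤ (n + 1) * (n.descFactorial (f + 1) * (n / 2 + 1)) := Nat.mul_le_mul_left _ hchoose
      _ ≤ (n + 1) * (n ^ (f + 1) * (n / 2 + 1)) := by gcongr; exact Nat.descFactorial_le_pow _ _
      _ < (n + 1) * ((2 ^ (m + 1)) ^ (f + 1) * (n / 2 + 1)) := by gcongr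
      _ ≤ 2 ^ (m + 1) * ((2 ^ (m + 1)) ^ (f + 1) * 2 ^ m) := by gcongr; omega
      _ = 2 ^ ((m + 1) * (f + 2) + m) := by ring
  have := (Nat.pow_lt_pow_iff_right one_lt_two).1 hpow
  linarith

theorem seven_le (hG : UTPFixity G f) (hn : 47 ≤ Fintype.card α) : 7 ≤ f := by
  by_contra! hf
  rcases lt_or_ge (Fintype.card α) 256 with hn' | hn'
  · have hchoose := hG.choose_le_descFactorial hf (by omega)
    generalize Fintype.card α = n at *
    refine absurd hchoose (not_le.2 ?_)
    simp only [Nat.choose_eq_descFactorial_div_factorial]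
    clear hchoose hG
    revert n
    decide +kernel
  · have hlog : 8 ≤ Nat.log 2 (Fintype.card α) :=
      (Nat.le_log_iff_pow_le one_lt_two (by omega)).2 hn'
    have hlower := Nat.pow_log_le_self 2 (show Fintype.card α ≠ 0 by omega)
    have hupper := hG.card_lt_mul (Nat.lt_pow_succ_log_self one_lt_two _)
    generalize Nat.log 2 (Fintype.card α) = m at *
    have hlarge : (m + 1) * 9 ≤ 2 ^ m := by
      clear hlower hupper
      induction m, hlog using Nat.le_induction with
      | base => norm_num
      | succ m hm ih => rw [pow_succ]; omega
    have : (m + 1) * (f + 3) ≤ (m + 1) * 9 := Nat.mul_le_mul_left _ (by omega)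
    omega

theorem mul_mul_add_le (hG : UTPFixity G f) (hf : 7 ≤ f) {x y z : ℕ} (hx : IsPrimePow x)
    (hy : IsPrimePow y) (hz : IsPrimePow z) (hxy : x.Coprime y) (hxz : x.Coprime z)
    (hyz : y.Coprime z) (hsum : x + y + z + 1 ≤ f) : x * y * z + f ≤ Fintype.card α + 1 := by
  have hne {a b : ℕ} (ha : IsPrimePow a) (hab : a.Coprime b) : a ≠ b := by
    rintro rfl
    exact ha.ne_one (a.coprime_self.1 hab)
  have hxyz : x ∉ ({y, z} : Finset ℕ) := by simp [hne hx hxy, hne hx hxz]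
  have hyz' : y ∉ ({z} : Finset ℕ) := by simp [hne hy hyz]
  have h2f := hG.two_mul_add_two_le
  have := hG.prod_add_le hf (Q := {x, y, z}) (by simp [hx, hy, hz])
    (by
      simpa [Set.pairwise_insert] using ⟨fun _ => ⟨hyz, hyz.symm⟩, fun _ => ⟨hxy, hxy.symm⟩,
        fun _ => ⟨hxz, hxz.symm⟩⟩)
    (by rw [sum_insert hxyz, sum_insert hyz', sum_singleton]; omega)
    (by rw [card_insert_of_notMem hxyz, card_insert_of_notMem hyz', card_singleton]; omega)
  rwa [prod_insert hxyz, prod_insert hyz', prod_singleton, ← mul_assoc] at this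

theorem card_lt_256 (hG : UTPFixity G f) : Fintype.card α < 256 := by
  by_contra! hn
  have hf := hG.seven_le (by omega)
  have h2f := hG.two_mul_add_two_le
  have hlog : 8 ≤ Nat.log 2 (Fintype.card α) := (Nat.le_log_iff_pow_le one_lt_two (by omega)).2 hn
  have hlower := Nat.pow_log_le_self 2 (show Fintype.card α ≠ 0 by omega)
  have hupper := Nat.lt_pow_succ_log_self one_lt_two (Fintype.card α)
  have hmul := hG.card_lt_mul hupper
  generalize Nat.log 2 (Fintype.card α) = m at *
  have hcase : m = 8 ∨ m = 9 ∨ m = 10 ∨ 11 ≤ m := by omega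
  rcases hcase with rfl | rfl | rfl | hm
  · have := hG.mul_mul_add_le hf (x := 7) (y := 8) (z := 9) (by decide +kernel)
      (by decide +kernel) (by decide +kernel) (by norm_num) (by norm_num) (by norm_num) (by omega)
    omega
  · have := hG.mul_mul_add_le hf (x := 7) (y := 11) (z := 13) (by decide +kernel)
      (by decide +kernel) (by decide +kernel) (by norm_num) (by norm_num) (by norm_num) (by omega)
    omega
  · have := hG.mul_mul_add_le hf (x := 11) (y := 13) (z := 16) (by decide +kernel)
      (by decide +kernel) (by decide +kernel) (by norm_num) (by norm_num) (by norm_num) (by omega)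
    omega
  · obtain ⟨L, hL, hL'⟩ : ∃ L, 3 * L + 1 ≤ f ∧ f + 3 ≤ 3 * (L + 2) :=
      ⟨(f - 1) / 3, by omega, by omega⟩
    have hcube := thirty_mul_succ_le_pow hm hlower
      ((by omega : Fintype.card α ≤ _).trans (Nat.mul_le_mul_left (m + 1) hL'))
    obtain ⟨x, y, z, hx, hy, hz, hxy, hxz, hyz, hxL, hyL, hzL, hprod⟩ :=
      exists_coprime_isPrimePow_le (L := L) (by by_contra! h; interval_cases L <;> omega)
    have := hG.mul_mul_add_le hf hx hy hz hxy hxz hyz (by omega)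
    omega

end UTPFixity

/-! ### Prime cycles and their normalizers -/

section

section Group

variable {H : Type*} [Group H]

theorem exists_conj_mem_zpowers [Finite H] {p : ℕ} (hp : p.Prime) (h2 : ¬ p ^ 2 ∣ Nat.card H)
    {x y : H} (hx : orderOf x = p) (hy : orderOf y = p) :
    ∃ k : H, k * y * k⁻¹ ∈ Subgroup.zpowers x := by
  have := Fact.mk hp
  have hcard : p ^ (Nat.card H).factorization p = p := by
    have h1 := (hp.pow_dvd_iff_le_factorization Nat.card_pos.ne').1
      (pow_one p ▸ hx ▸ orderOf_dvd_natCard x)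
    have h2 := mt (hp.pow_dvd_iff_le_factorization Nat.card_pos.ne').2 h2
    rw [show (Nat.card H).factorization p = 1 by omega, pow_one]
  let P : Sylow p H := Sylow.ofCard (Subgroup.zpowers x) (by rw [Nat.card_zpowers, hx, hcard])
  let Q : Sylow p H := Sylow.ofCard (Subgroup.zpowers y) (by rw [Nat.card_zpowers, hy, hcard])
  obtain ⟨k, hk⟩ := exists_smul_eq H Q P
  have hmem : k * y * k⁻¹ ∈ k • Q :=
    Subgroup.smul_mem_pointwise_smul _ (MulAut.conj k) Q.toSubgroup (Subgroup.mem_zpowers y)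
  rw [hk] at hmem
  exact ⟨k, hmem⟩

theorem commute_commutator_of_conj_mem_zpowers {a b c : H}
    (ha : a⁻¹ * c * a ∈ Subgroup.zpowers c) (hb : b⁻¹ * c * b ∈ Subgroup.zpowers c) :
    Commute ⁅a, b⁆ c := by
  obtain ⟨m, hm⟩ := Subgroup.mem_zpowers_iff.1 ha
  obtain ⟨l, hl⟩ := Subgroup.mem_zpowers_iff.1 hb
  have ha : SemiconjBy a⁻¹ c (c ^ m) := by rw [hm]; simp [SemiconjBy]
  have hb : SemiconjBy b⁻¹ c (c ^ l) := by rw [hl]; simp [SemiconjBy]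
  have hab : SemiconjBy (a⁻¹ * b⁻¹) c (c ^ (m * l)) := by
    rw [zpow_mul]
    exact (ha.zpow_right l).mul_left hb
  have hba : SemiconjBy (b⁻¹ * a⁻¹) c (c ^ (m * l)) := by
    rw [zpow_mul']
    exact (hb.zpow_right m).mul_left ha
  have habc := hba.inv_symm_left.mul_left hab
  rwa [mul_inv_rev, inv_inv, inv_inv, ← mul_assoc] at habc

end Group

variable {α : Type*} [Fintype α] {p : ℕ}

theorem not_sq_dvd_card_of_card_lt_two_mul (hp : p.Prime) (hn : Fintype.card α < 2 * p)
    (H : Subgroup (Perm α)) : ¬ p ^ 2 ∣ Nat.card H := by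
  intro h
  replace h := h.trans H.card_subgroup_dvd_card
  have hlog : Nat.log p (Fintype.card α) < 2 :=
    Nat.log_lt_of_lt_pow' two_ne_zero (hn.trans_le (by rw [pow_two]; gcongr; exact hp.two_le))
  rw [Nat.card_perm, Nat.card_eq_fintype_card, hp.pow_dvd_factorial_iff hlog,
    Nat.Ico_succ_singleton, sum_singleton, pow_one, Nat.le_div_iff_mul_le hp.pos] at h
  omega

variable {G : Subgroup (Perm α)} {Z : Finset α} {a b c g σ τ : Perm α}

/-- The Frattini argument for the Sylow subgroup `⟨c⟩` of the pointwise stabilizer of `Z`. -/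
theorem exists_eqOn_conj_mem_zpowers (hp : p.Prime) (hn : Fintype.card α < 2 * p)
    (hc : c ∈ ptStab G Z) (hcp : orderOf c = p) (hσ : ∀ z ∈ Z, σ z ∈ Z) (hg : g ∈ G)
    (hgσ : ∀ z ∈ Z, g z = σ z) :
    ∃ a ∈ G, (∀ z ∈ Z, a z = σ z) ∧ a⁻¹ * c * a ∈ Subgroup.zpowers c := by
  have hcg : g⁻¹ * c * g ∈ ptStab G Z := by
    rw [mem_ptStab] at hc ⊢
    refine ⟨mul_mem (mul_mem (inv_mem hg) hc.1) hg, fun z hz => ?_⟩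
    rw [Perm.mul_apply, Perm.mul_apply, Perm.inv_eq_iff_eq, hgσ z hz, hc.2 _ (hσ z hz)]
  obtain ⟨⟨k, hk⟩, hkc⟩ := exists_conj_mem_zpowers hp
    (not_sq_dvd_card_of_card_lt_two_mul hp hn (ptStab G Z)) (x := ⟨c, hc⟩) (y := ⟨g⁻¹ * c * g, hcg⟩)
    (by rwa [Subgroup.orderOf_mk])
    (by simpa [Subgroup.orderOf_mk, hcp] using MulEquiv.orderOf_eq (MulAut.conj g⁻¹) c)
  refine ⟨g * k⁻¹, mul_mem hg (inv_mem (ptStab_le hk)), fun z hz => ?_, ?_⟩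
  · rw [Perm.mul_apply, (mem_ptStab.1 (inv_mem hk)).2 z hz, hgσ z hz]
  · obtain ⟨m, hm⟩ := Subgroup.mem_zpowers_iff.1 hkc
    exact Subgroup.mem_zpowers_iff.2 ⟨m, by simpa [mul_assoc] using congrArg Subtype.val hm⟩

variable [DecidableEq α]

theorem inv_apply_eq_inv_apply (hσ : σ.support ⊆ Z) (ha : ∀ z ∈ Z, a z = σ z) :
    ∀ z ∈ Z, a⁻¹ z = σ⁻¹ z := fun z hz => by
  rw [Perm.inv_eq_iff_eq, ha _ (apply_mem_of_support_subset (by rwa [Perm.support_inv]) hz),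
    Perm.inv_def, apply_symm_apply]

theorem commutator_apply_eq_commutator_apply (hσ : σ.support ⊆ Z) (hτ : τ.support ⊆ Z)
    (ha : ∀ z ∈ Z, a z = σ z) (hb : ∀ z ∈ Z, b z = τ z) : ∀ z ∈ Z, ⁅a, b⁆ z = ⁅σ, τ⁆ z := by
  intro z hz
  have hτz : τ⁻¹ z ∈ Z := apply_mem_of_support_subset (by rwa [Perm.support_inv]) hz
  have hστz : σ⁻¹ (τ⁻¹ z) ∈ Z := apply_mem_of_support_subset (by rwa [Perm.support_inv]) hτz
  simp only [commutatorElement_def, Perm.mul_apply]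
  rw [inv_apply_eq_inv_apply hτ hb z hz, inv_apply_eq_inv_apply hσ ha _ hτz, hb _ hστz,
    ha _ (apply_mem_of_support_subset hτ hστz)]

theorem support_commutator_subset (hσ : σ.support ⊆ Z) (hτ : τ.support ⊆ Z) :
    ⁅σ, τ⁆.support ⊆ Z := by
  have h (ρ : Perm α) : ρ.support ⊆ Z ↔ ρ ∈ fixingSubgroup (Perm α) (Z : Set α)ᶜ := by
    simp [mem_fixingSubgroup_iff, subset_iff, not_imp_comm]
  rw [h] at *
  exact mul_mem (mul_mem (mul_mem hσ hτ) (inv_mem hσ)) (inv_mem hτ)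

theorem pow_orderOf_apply_of_commute_isCycle (hc : c.IsCycle) (h : Commute g c) {w : α}
    (hw : w ∈ c.support) : (g ^ orderOf c) w = w := by
  obtain ⟨hsupp, j, hj⟩ := hc.commute_iff.1 h
  have hgc (v) (hv : v ∈ c.support) : g v = (c ^ j) v := by
    simp only at hj
    rw [hj, Perm.ofSubtype_apply_of_mem _ hv, Perm.subtypePerm_apply]
  rw [pow_apply_eq_pow_apply (fun v => Perm.zpow_apply_mem_support.2) hgc _ hw, ← zpow_natCast,
    zpow_comm, zpow_natCast, pow_orderOf_eq_one, one_zpow, Perm.one_apply]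

/-- Elements `a` and `b` that normalize `⟨c⟩` and agree with `σ` and `τ` on the fixed points of `c`
have a commutator that commutes with `c`, so its `p`-th power fixes the support of `c`. -/
theorem commutator_pow_mem (hp : p.Prime) (hn : Fintype.card α < 2 * p) (hc : c ∈ G)
    (hcp : orderOf c = p)
    (hG : ∀ σ : Perm α, ∃ g ∈ G, ∀ z ∈ c.supportᶜ, g z = σ z)
    (hσ : σ.support ⊆ c.supportᶜ) (hτ : τ.support ⊆ c.supportᶜ) : ⁅σ, τ⁆ ^ p ∈ G := by
  have hcZ : c ∈ ptStab G c.supportᶜ := mem_ptStab.2 ⟨hc, by simp⟩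
  have hcyc : c.IsCycle := Perm.isCycle_of_prime_order' (hcp ▸ hp) (hcp ▸ hn)
  have hnorm (ρ : Perm α) (hρ : ρ.support ⊆ c.supportᶜ) :
      ∃ a ∈ G, (∀ z ∈ c.supportᶜ, a z = ρ z) ∧ a⁻¹ * c * a ∈ Subgroup.zpowers c := by
    obtain ⟨g, hg, hgρ⟩ := hG ρ
    exact exists_eqOn_conj_mem_zpowers hp hn hcZ hcp
      (fun z hz => apply_mem_of_support_subset hρ hz) hg hgρ
  obtain ⟨a, ha, haσ, hac⟩ := hnorm σ hσ
  obtain ⟨b, hb, hbτ, hbc⟩ := hnorm τ hτ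
  suffices h : ⁅σ, τ⁆ ^ p = ⁅a, b⁆ ^ p from
    h ▸ pow_mem (mul_mem (mul_mem (mul_mem ha hb) (inv_mem ha)) (inv_mem hb)) p
  have huZ := commutator_apply_eq_commutator_apply hσ hτ haσ hbτ
  have hστ : ⁅σ, τ⁆.support ⊆ c.supportᶜ := support_commutator_subset hσ hτ
  refine Perm.ext fun w => ?_
  by_cases hw : w ∈ c.supportᶜ
  · exact (pow_apply_eq_pow_apply (fun z => apply_mem_of_support_subset hστ) huZ p hw).symm
  · rw [Perm.pow_apply_eq_self_of_apply_eq_self (Perm.notMem_support.1 fun h => hw (hστ h)), ← hcp,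
      pow_orderOf_apply_of_commute_isCycle hcyc (commute_commutator_of_conj_mem_zpowers hac hbc)
        (by simpa using hw)]

/-- With `Z` the set of fixed points of a `p`-cycle in `G`, the element is a power of a commutator
of elements of `G` inducing two transpositions of `Z` with one common point. -/
theorem exists_card_support_eq_three (hp : p.Prime) (hn : Fintype.card α < 2 * p)
    (hp3 : p + 3 ≤ Fintype.card α) (hpG : p ∣ Nat.card G)
    (hG : ∀ Z : Finset α, #Z + p = Fintype.card α → ∀ σ : Perm α, ∃ g ∈ G, ∀ z ∈ Z, g z = σ z) :
    ∃ g ∈ G, #g.support = 3 := by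
  have := Fact.mk hp
  obtain ⟨⟨c, hc⟩, hcp⟩ := exists_prime_orderOf_dvd_card' p hpG
  rw [Subgroup.orderOf_mk] at hcp
  have hcyc : c.IsCycle := Perm.isCycle_of_prime_order' (hcp ▸ hp) (hcp ▸ hn)
  have hZ : #c.supportᶜ + p = Fintype.card α := by
    rw [← hcp, hcyc.orderOf, add_comm, card_add_card_compl]
  obtain ⟨x, hx, y, hy, z, hz, hxy, hxz, hyz⟩ := two_lt_card.1 (show 2 < #c.supportᶜ by omega)
  have h3 : ⁅swap x y, swap x z⁆.IsThreeCycle := isThreeCycle_commutator (a := x) <| by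
    rw [Perm.support_swap hxy, Perm.support_swap hxz]
    grind
  refine ⟨⁅swap x y, swap x z⁆ ^ p, commutator_pow_mem hp hn hc hcp (hG _ hZ) ?_ ?_, ?_⟩
  · rw [Perm.support_swap hxy]
    grind
  · rw [Perm.support_swap hxz]
    grind
  · rw [Perm.support_pow_coprime, h3.card_support]
    rw [h3.orderOf, Nat.coprime_primes hp Nat.prime_three]
    omega

end

/-! ### Small degree -/

section Orbits

variable {α : Type*} {G : Subgroup (Perm α)} {A : Finset α} {x y : α}

theorem ncard_orbit_dvd_card (G : Subgroup (Perm α)) (A : Finset α) (x : α) :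
    (orbit (ptStab G A) x).ncard ∣ Nat.card G := by
  classical
  exact (Dvd.intro _ (ncard_orbit_mul_card_ptStab_insert G A x)).trans
    (Subgroup.card_dvd_of_le ptStab_le)

variable [DecidableEq α]

theorem ncard_orbit_eq_card (h : ptStab G (insert x A) = ⊥) :
    (orbit (ptStab G A) x).ncard = Nat.card (ptStab G A) := by
  rw [← ncard_orbit_mul_card_ptStab_insert G A x, h, Subgroup.card_bot, mul_one]

theorem SameOrbit.ptStab_insert_eq_bot [Finite α] (h : SameOrbit G A x y)
    (hx : ptStab G (insert x A) = ⊥) : ptStab G (insert y A) = ⊥ := by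
  rw [Subgroup.eq_bot_iff_card] at hx ⊢
  rw [← h.card_ptStab_insert_eq, hx]

variable [Fintype α]

theorem orbit_subset_compl (hx : x ∉ A) : orbit (ptStab G A) x ⊆ ↑Aᶜ := fun y hy => by
  rw [mem_coe, mem_compl]
  exact (sameOrbit_iff_mem_orbit.2 hy).notMem hx

theorem TransitiveOff.ncard_orbit (h : TransitiveOff G A) (hx : x ∉ A) :
    (orbit (ptStab G A) x).ncard = #Aᶜ := by
  rw [← Set.ncard_coe_finset, (orbit_subset_compl hx).antisymm fun y hy =>
    sameOrbit_iff_mem_orbit.1 (h hx (mem_compl.1 (mem_coe.1 hy)))]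

theorem dvd_card_compl_of_forall_dvd_ncard_orbit {q : ℕ}
    (h : ∀ x, x ∉ A → q ∣ (orbit (ptStab G A) x).ncard) : q ∣ #Aᶜ := by
  classical
  rw [card_eq_sum_card_image (orbit (ptStab G A))]
  refine dvd_sum fun O hO => ?_
  obtain ⟨x, hx, rfl⟩ := mem_image.1 hO
  have hfiber : (({y ∈ Aᶜ | orbit (ptStab G A) y = orbit (ptStab G A) x} : Finset α) : Set α) =
      orbit (ptStab G A) x := by
    ext y
    rw [mem_coe, mem_filter, orbit_eq_iff]
    exact and_iff_right_of_imp fun hy => orbit_subset_compl (mem_compl.1 hx) hy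
  rw [← Set.ncard_coe_finset, hfiber]
  exact h x (mem_compl.1 hx)

end Orbits

theorem exists_prime_of_lt_256 : ∀ n < 256, 47 ≤ n → n ≠ 55 → ∃ p < n - 2, p.Prime ∧
    n < 2 * p ∧ n.descFactorial (n + 1 - p) * (n / 2 + 1) < n.choose (n / 2) := by
  simp only [Nat.choose_eq_descFactorial_div_factorial]
  decide +kernel

namespace UTPFixity

variable {α : Type*} [Fintype α] [DecidableEq α] {G : Subgroup (Perm α)} {f : ℕ} {B : Finset α}
  {x y : α} {p : ℕ}

theorem le_of_descFactorial_mul_lt (hG : UTPFixity G f) {k : ℕ} (hk : k ≤ Fintype.card α)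
    (h : (Fintype.card α).descFactorial k * (Fintype.card α / 2 + 1) <
      (Fintype.card α).choose (Fintype.card α / 2)) : k ≤ f :=
  not_lt.1 fun hfk => h.not_ge (hG.choose_le_descFactorial hfk hk)

/-- The graph of `exists_edge_of_cut` is not a matching. -/
theorem exists_two_ptStab_insert_ne_bot (hG : UTPFixity G f) (hf : 2 ≤ f) :
    ∃ (B : Finset α) (x y : α), #B + 1 = f ∧ x ∉ B ∧ y ∉ B ∧ x ≠ y ∧
      ptStab G (insert x B) ≠ ⊥ ∧ ptStab G (insert y B) ≠ ⊥ := by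
  have h2f := hG.two_mul_add_two_le
  obtain ⟨A, -, hA⟩ := exists_subset_card_eq (s := (univ : Finset α)) (n := f - 2)
    (by rw [card_univ]; omega)
  obtain ⟨x, hx⟩ := exists_notMem_of_card_lt (A := A) (by omega)
  have hxA := card_insert_of_notMem hx
  obtain ⟨y, hy, hxy⟩ := hG.exists_ptStab_insert_ne_bot (B := insert x A) (by omega) hf
  have hyA := card_insert_of_notMem (show y ∉ A by grind)
  obtain ⟨z, hz⟩ := exists_notMem_of_card_lt (A := insert y (insert x A))
    (by rw [card_insert_of_notMem hy]; omega)
  obtain ⟨u, v, -, hv, rfl | rfl, hvxy, huv⟩ := hG.exists_edge_of_cut (A := A) (by omega)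
    (p := fun z => z = x ∨ z = y) hx (y := z) (by grind) (.inl rfl) (by grind)
  · exact ⟨insert u A, y, v, by omega, hy, by grind, by grind, hxy, huv⟩
  · exact ⟨insert u A, x, v, by omega, by grind, by grind, by grind, by rwa [insert_comm], huv⟩

theorem ncard_orbit_dvd_ncard_orbit (hG : UTPFixity G f) (hB : #B + 1 = f) (hx : x ∉ B)
    (hxne : ptStab G (insert x B) ≠ ⊥) (hy : y ∉ B) :
    (orbit (ptStab G B) x).ncard ∣ (orbit (ptStab G B) y).ncard := by
  by_cases hyne : ptStab G (insert y B) = ⊥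
  · rw [ncard_orbit_eq_card hyne]
    exact Dvd.intro _ (ncard_orbit_mul_card_ptStab_insert G B x)
  · rw [orbit_eq_iff.2 (sameOrbit_iff_mem_orbit.1
      (hG.sameOrbit_of_ptStab_insert_ne_bot hB hy hx hyne hxne))]

theorem dvd_card_of_add_eq_card_add_one (hG : UTPFixity G f) (hf : 2 ≤ f) (hp : p.Prime)
    (hpf : p + f = Fintype.card α + 1) : p ∣ Nat.card G := by
  obtain ⟨B, x, y, hB, hx, hy, hxy, hxne, hyne⟩ := hG.exists_two_ptStab_insert_ne_bot hf
  have hdvd : (orbit (ptStab G B) x).ncard ∣ p := by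
    rw [show p = #Bᶜ by rw [card_compl]; omega]
    exact dvd_card_compl_of_forall_dvd_ncard_orbit fun z hz =>
      hG.ncard_orbit_dvd_ncard_orbit hB hx hxne hz
  have hyx := sameOrbit_iff_mem_orbit.1 (hG.sameOrbit_of_ptStab_insert_ne_bot hB hx hy hxne hyne)
  have hone : 1 < (orbit (ptStab G B) x).ncard :=
    (Set.one_lt_ncard_iff).2 ⟨x, y, mem_orbit_self x, hyx, hxy⟩
  rw [← (hp.eq_one_or_self_of_dvd _ hdvd).resolve_left hone.ne']
  exact ncard_orbit_dvd_card G B x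

theorem dvd_card_of_add_eq_card (hG : UTPFixity G f) (hp : p.Prime)
    (hpf : p + f = Fintype.card α) : p ∣ Nat.card G := by
  obtain ⟨A, hA, hne⟩ := hG.exists_ptStab_ne_bot
  have hdvd : Nat.card (ptStab G A) ∣ p := by
    rw [show p = #Aᶜ by rw [card_compl]; omega]
    refine dvd_card_compl_of_forall_dvd_ncard_orbit (G := G) fun x hx => ?_
    rw [ncard_orbit_eq_card (by_contra fun hxne => ?_)]
    have := hG.card_le hxne
    rw [card_insert_of_notMem hx] at this
    omega
  rw [← (hp.eq_one_or_self_of_dvd _ hdvd).resolve_left 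
    (mt (Subgroup.eq_bot_iff_card _).2 hne)]
  exact Subgroup.card_dvd_of_le ptStab_le

/-- If the stabilizer has no room for a regular orbit beside the points of its nonregular one, it is
transitive. -/
theorem transitiveOff_of_card_lt (hG : UTPFixity G f) (hf : 2 ≤ f) (hB : #B + 1 = f)
    (hK : Fintype.card α < Nat.card (ptStab G B) + f) : TransitiveOff G B := by
  have h2f := hG.two_mul_add_two_le
  have hne (x) (hx : x ∉ B) : ptStab G (insert x B) ≠ ⊥ := by
    intro hbot
    obtain ⟨y, hy, hyne⟩ := hG.exists_ptStab_insert_ne_bot hB hf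
    have hsub : orbit (ptStab G B) x ⊆ ↑(insert y B)ᶜ := fun z hz => by
      have hxz := sameOrbit_iff_mem_orbit.2 hz
      have hzy : z ≠ y := fun h => hyne (h ▸ hxz.ptStab_insert_eq_bot hbot)
      simpa [hzy] using hxz.notMem hx
    have hcard := Set.ncard_le_ncard hsub
    rw [Set.ncard_coe_finset, ncard_orbit_eq_card hbot, card_compl, card_insert_of_notMem hy]
      at hcard
    omega
  exact fun x y hx hy => hG.sameOrbit_of_ptStab_insert_ne_bot hB hx hy (hne x hx) (hne y hy)

theorem card_support_ne_three (hG : UTPFixity G f) (hf : 2 ≤ f) {g : Perm α} (hg : g ∈ G) :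
    #g.support ≠ 3 := fun h => by
  have hg1 : g ≠ 1 := by rintro rfl; simp at h
  have := hG.two_mul_add_two_le
  have := hG.card_le_add_card_support hg hg1
  omega

theorem add_le_card_of_prime (hG : UTPFixity G f) (hf : 7 ≤ f) (hp : p.Prime)
    (hn : Fintype.card α < 2 * p) (hp3 : p + 3 ≤ Fintype.card α) : p + f ≤ Fintype.card α := by
  by_contra! hpf
  have hpG : p ∣ Nat.card G := by
    rcases (Nat.succ_le_of_lt hpf).eq_or_lt with h | h
    · exact hG.dvd_card_of_add_eq_card_add_one (by omega) hp h.symm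
    · obtain ⟨C, -, hC⟩ := exists_subset_card_eq (s := (univ : Finset α))
        (n := Fintype.card α - p) (by rw [card_univ]; omega)
      obtain ⟨x, hx⟩ := exists_notMem_of_card_lt (A := C) (by have := hp.pos; omega)
      have horbit := (hG.transitiveOff hf (C := C) (by omega)).ncard_orbit hx
      rw [show p = #Cᶜ by rw [card_compl]; omega, ← horbit]
      exact ncard_orbit_dvd_card G C x
  obtain ⟨g, hg, hg3⟩ := exists_card_support_eq_three hp hn hp3 hpG fun Z hZ σ =>
    hG.exists_eqOn hf (by omega) σ
  exact hG.card_support_ne_three (by omega) hg hg3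

/-- In degree 55 the bound on the order of `G` only gives `8 ≤ f`. If `f = 8`, it also implies that
the stabilizers of seven points have order at least 48, so that `G` is 8-transitive. -/
theorem card_ne_55 (hG : UTPFixity G f) : Fintype.card α ≠ 55 := by
  intro hn
  have hp : Nat.Prime 47 := by norm_num
  have hf : f = 8 := by
    have := hG.le_of_descFactorial_mul_lt (k := 8) (by omega) (by
      rw [hn]; simp only [Nat.choose_eq_descFactorial_div_factorial]; decide +kernel)
    have := hG.add_le_card_of_prime (by omega) hp (by omega) (by omega)
    omega
  subst hf
  have htop (B : Finset α) (hB : #B = 7) : TransitiveOff G B := by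
    refine hG.transitiveOff_of_card_lt (by omega) (by omega) ?_
    by_contra! hK
    have hchoose := hG.hasUTP.choose_le_card_mul (r := 27) (by omega)
    have hcard := card_le_descFactorial_mul_card_ptStab G B
    rw [hn, hB] at hcard
    rw [hn] at hchoose
    have hnum : Nat.descFactorial 55 7 * 47 * 28 < Nat.choose 55 27 := by
      simp only [Nat.choose_eq_descFactorial_div_factorial]; decide +kernel
    refine absurd (hchoose.trans (Nat.mul_le_mul_right _ (hcard.trans ?_))) hnum.not_ge
    exact Nat.mul_le_mul_left _ (by omega)
  have htrans (C : Finset α) (hC : #C < 8) : TransitiveOff G C :=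
    (Nat.lt_succ_iff_lt_or_eq.1 hC).elim (fun h => hG.transitiveOff (by omega) (by omega)) (htop C)
  obtain ⟨g, hg, hg3⟩ := exists_card_support_eq_three hp (by omega) (by omega)
    (hG.dvd_card_of_add_eq_card hp (by omega))
    fun Z hZ σ => exists_eqOn_of_forall_transitiveOff htrans (by omega) σ
  exact hG.card_support_ne_three (by omega) hg hg3

theorem card_lt_47 (hG : UTPFixity G f) : Fintype.card α < 47 := by
  by_contra! hn
  obtain ⟨p, hp3, hp, hn2, h⟩ :=
    exists_prime_of_lt_256 _ hG.card_lt_256 hn hG.card_ne_55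
  have := hG.le_of_descFactorial_mul_lt (by omega) h
  have := hG.add_le_card_of_prime (hG.seven_le hn) hp hn2 (by omega)
  omega

end UTPFixity

theorem exists_utpFixity {α : Type*} [Fintype α] [DecidableEq α] [Nontrivial α]
    {G : Subgroup (Perm α)} (hprim : IsPreprimitive G α) (hA : ¬ alternatingGroup α ≤ G)
    (hU : HasUTP G) : ∃ f, UTPFixity G f := by
  classical
  have hG : ptStab G ∅ ≠ ⊥ := by
    obtain ⟨x, y, hxy⟩ := exists_pair_ne α
    obtain ⟨g, hg⟩ := exists_smul_eq G x y
    rw [ptStab_empty]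
    rintro rfl
    exact hxy (by simpa [Subsingleton.elim g 1] using hg)
  obtain ⟨A, hAne, hmax⟩ := exists_max_image {A : Finset α | ptStab G A ≠ ⊥} card ⟨∅, by simpa⟩
  rw [mem_filter_univ] at hAne
  obtain ⟨⟨g, hg⟩, hg1⟩ := Subgroup.ne_bot_iff_exists_ne_one.1 hAne
  refine ⟨#A, hU, hprim.toIsPretransitive, fun hB => hmax _ (by simpa), ⟨A, rfl, hAne⟩, ?_⟩
  have hsupp := lt_card_support_of_mem hprim hA hU (ptStab_le hg) fun h => hg1 (Subtype.ext h)
  have hfix : A ⊆ g.supportᶜ := fun a ha => by simpa using (mem_ptStab.1 hg).2 a ha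
  have := card_le_card hfix
  have := card_add_card_compl g.support
  omega

end

theorem stmt15_general {α : Type*} [Fintype α] [DecidableEq α] (hn : 47 ≤ Fintype.card α)
    (G : Subgroup (Equiv.Perm α)) (hprim : MulAction.IsPreprimitive G α)
    (hA : ¬ alternatingGroup α ≤ G) : ¬ HasUTP G := by
  intro hU
  have : Nontrivial α := Fintype.one_lt_card_iff_nontrivial.1 (by omega)
  obtain ⟨f, hG⟩ := exists_utpFixity hprim hA hU
  exact hG.card_lt_47.not_ge hn

theorem stmt15 (n : ℕ) (hn : 47 ≤ n) (G : Subgroup (Equiv.Perm (Fin n)))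
    (htrans : ∀ x y : Fin n, ∃ g ∈ G, g x = y)
    (hprim : ∀ P : Finpartition (Finset.univ : Finset (Fin n)),
      (∀ g ∈ G, ∀ p ∈ P.parts, p.image ⇑g ∈ P.parts) →
      P.parts.card = 1 ∨ ∀ p ∈ P.parts, p.card = 1)
    (hA : ¬ alternatingGroup (Fin n) ≤ G) :
    ¬ HasUTP G :=
  stmt15_general (by rwa [Fintype.card_fin]) G (isPreprimitive_of_partitions htrans hprim) hA
end

section
/- For every n ≥ 1, the alternating group A_n and the symmetric group S_n have the universal transversal property. -/
/-!
Let `I` have as many elements as `P` has classes. Choosing a point in each class gives a transversal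
of size `|I|`, so it is enough that the group is transitive on the subsets of size `|I|`. Two sizes
need no transitivity: if `|I| ≤ 1`, then `P` has at most one class and `I` is already a transversal,
and if `|I| = n`, then `I` is the whole ground set. For `1 < k < n` the alternating group is
transitive on the `k`-subsets, because an odd permutation becomes even, with the same image of a
subset, when it is precomposed with a transposition of two points of that subset. The size `1` has
to be set apart because `A_2` is not transitive on points.
-/

open Finset

section

variable {α : Type*} [DecidableEq α]

theorem exists_mem_image_eq_of_isPretransitive {G : Subgroup (Equiv.Perm α)} {k : ℕ}
    (hG : MulAction.IsPretransitive G (Set.powersetCard α k)) {I T : Finset α}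
    (hI : #I = k) (hT : #T = k) : ∃ g ∈ G, I.image ⇑g = T := by
  obtain ⟨⟨g, hg⟩, hgI⟩ :=
    hG.exists_smul_eq (⟨I, hI⟩ : Set.powersetCard α k) (⟨T, hT⟩ : Set.powersetCard α k)
  exact ⟨g, hg, congrArg Subtype.val hgI⟩

variable [Fintype α]

theorem isTransversal_of_bijOn_part {T : Finset α} {P : Finpartition (univ : Finset α)}
    (hT : Set.BijOn P.part T P.parts) : IsTransversal T P := by
  intro p hp
  obtain ⟨x, hxT, rfl⟩ := hT.surjOn hp
  refine card_eq_one.2 ⟨x, ?_⟩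
  ext y
  rw [mem_inter, mem_singleton, P.mem_part_iff_part_eq_part (mem_univ y) (mem_univ x)]
  refine ⟨fun ⟨hyT, hyx⟩ => hT.injOn hyT hxT hyx, ?_⟩
  rintro rfl
  exact ⟨hxT, rfl⟩

theorem exists_isTransversal_card_eq (P : Finpartition (univ : Finset α)) :
    ∃ T, IsTransversal T P ∧ #T = #P.parts := by
  obtain ⟨T, -, hT⟩ := P.exists_subset_part_bijOn
  exact ⟨T, isTransversal_of_bijOn_part hT, card_nbij _ hT.mapsTo hT.injOn hT.surjOn⟩

theorem isTransversal_of_card_le_one {I : Finset α} {P : Finpartition (univ : Finset α)}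
    (hIP : #P.parts = #I) (hI : #I ≤ 1) : IsTransversal I P := by
  intro p hp
  have hI_eq : #I = 1 := hI.antisymm (hIP ▸ card_pos.2 ⟨p, hp⟩)
  have hp_univ : p = univ := by
    refine eq_univ_of_forall fun x => ?_
    rw [card_le_one.1 (hIP.trans_le hI) p hp (P.part x) (P.part_mem.2 (mem_univ x))]
    exact P.mem_part (mem_univ x)
  rw [hp_univ, inter_univ, hI_eq]

theorem hasUTP_of_isPretransitive_powersetCard {G : Subgroup (Equiv.Perm α)}
    (hG : ∀ k, 1 < k → k < Fintype.card α → MulAction.IsPretransitive G (Set.powersetCard α k)) :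
    HasUTP G := by
  intro I P hIP
  rcases le_or_gt #I 1 with hI | hI
  · exact ⟨1, one_mem G, by simpa using isTransversal_of_card_le_one hIP hI⟩
  obtain ⟨T, hT, hTP⟩ := exists_isTransversal_card_eq P
  have hTI : #T = #I := hTP.trans hIP
  suffices ∃ g ∈ G, I.image ⇑g = T by
    obtain ⟨g, hg, rfl⟩ := this
    exact ⟨g, hg, hT⟩
  rcases I.card_le_univ.eq_or_lt with hI_univ | hI_lt
  · have hI_eq : I = univ := eq_univ_of_card I hI_univ
    have hT_eq : T = univ := eq_univ_of_card T (hTI.trans hI_univ)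
    exact ⟨1, one_mem G, by simp [hI_eq, hT_eq]⟩
  · exact exists_mem_image_eq_of_isPretransitive (hG _ hI hI_lt) rfl hTI

theorem HasUTP.mono {G H : Subgroup (Equiv.Perm α)} (hG : HasUTP G) (hGH : G ≤ H) :
    HasUTP H := by
  intro I P hIP
  obtain ⟨g, hg, hgI⟩ := hG I P hIP
  exact ⟨g, hGH hg, hgI⟩

variable (α)

theorem hasUTP_alternatingGroup : HasUTP (alternatingGroup α) := by
  refine hasUTP_of_isPretransitive_powersetCard fun k hk hkα => ?_
  have hα : 3 ≤ Nat.card α := by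
    rw [Nat.card_eq_fintype_card]
    lia
  exact Set.powersetCard.isPretransitive_alternatingGroup hα

theorem stmt17_general :
    HasUTP (alternatingGroup α) ∧ HasUTP (⊤ : Subgroup (Equiv.Perm α)) :=
  ⟨hasUTP_alternatingGroup α, (hasUTP_alternatingGroup α).mono le_top⟩

end

theorem stmt17 (n : ℕ) (hn : 1 ≤ n) :
    HasUTP (alternatingGroup (Fin n)) ∧
    HasUTP (⊤ : Subgroup (Equiv.Perm (Fin n))) :=
  stmt17_general (Fin n)
end

section
/- Let p ≥ 5 be a prime, let k ≥ 2, and let V be the k-dimensional vector space over the field F_p with p elements. Let G be a group of permutations of V every element of which is an affine transformation of V (i.e. of the form v ↦ vA + b with A an invertible linear map and b ∈ V). Then G does not have the universal transversal property with respect to its action on the set V: there exist a subset I of V and a partition P of V with exactly |I| classes such that for no g ∈ G is Ig a transversal for P. -/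
/-!
Affine bijections preserve three-term arithmetic progressions in both directions, so they map
3AP-free sets to 3AP-free sets. If `{a}`, `{b}` and `{c}` are classes of `P` with `a`, `b`, `c` a
nontrivial progression, then every transversal for `P` contains that progression. Hence no affine
image of a 3AP-free set is a transversal for such a `P`. A partition into three such singletons and
the remaining points has four classes, so it suffices to find a 3AP-free set with four points; in
odd characteristic, `{0, 1}ᵏ` is 3AP-free and has at least four points as soon as `2 ≤ k`.
-/

open Finset

lemma IsTransversal.mem_of_singleton_mem_parts {α : Type*} [DecidableEq α] [Fintype α]
    {T : Finset α} {P : Finpartition (univ : Finset α)} (hT : IsTransversal T P) {x : α}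
    (hx : {x} ∈ P.parts) : x ∈ T := by
  by_contra hxT
  have hcard : #(T ∩ {x}) = 1 := hT _ hx
  rw [inter_singleton_of_notMem hxT, card_empty] at hcard
  exact zero_ne_one hcard

lemma exists_finpartition_singleton_mem_parts {α : Type*} [DecidableEq α] [Fintype α]
    {S : Finset α} (hS : #S < Fintype.card α) :
    ∃ P : Finpartition (univ : Finset α), #P.parts = #S + 1 ∧ ∀ x ∈ S, {x} ∈ P.parts := by
  have hSc : Sᶜ ≠ ∅ := (compl_eq_empty_iff S).not.2 ((card_lt_iff_ne_univ S).1 hS)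
  refine ⟨(⊥ : Finpartition S).extend hSc disjoint_compl_right (union_compl S), ?_, ?_⟩
  · rw [Finpartition.card_extend, Finpartition.card_bot]
  · intro x hx
    exact mem_insert_of_mem (Finpartition.mem_bot_iff.2 ⟨x, hx, rfl⟩)

lemma threeAPFree_pair {M : Type*} [AddCancelCommMonoid M] {x y : M} (hxy : x + x ≠ y + y) :
    ThreeAPFree ({x, y} : Set M) := by
  simp only [threeAPFree_insert, threeAPFree_singleton, Set.mem_singleton_iff, forall_eq, true_and]
  exact ⟨add_right_cancel, fun h ↦ absurd h.symm hxy⟩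

open scoped Pointwise in
lemma threeAPFree_image_affine {M N : Type*} [AddCommMonoid M] [AddCancelCommMonoid N] {s : Set M}
    (hs : ThreeAPFree s) {A : M →+ N} (hA : Function.Injective A) (b : N) :
    ThreeAPFree ((fun v ↦ A v + b) '' s) := by
  have h : ThreeAPFree (b +ᵥ A '' s) := (hs.image' A hA.injOn).vadd_set
  simpa only [← Set.image_vadd, Set.image_image, vadd_eq_add, add_comm b] using h

lemma prod_addRothNumber_le_addRothNumber_piFinset {ι : Type*} [Fintype ι] [DecidableEq ι]
    {M : ι → Type*} [∀ i, AddMonoid (M i)] [∀ i, DecidableEq (M i)] (s : ∀ i, Finset (M i)) :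
    ∏ i, addRothNumber (s i) ≤ addRothNumber (Fintype.piFinset s) := by
  choose t hts hcard ht using fun i ↦ addRothNumber_spec (s i)
  have hfree : ThreeAPFree (Fintype.piFinset t : Set (∀ i, M i)) := by
    rw [Fintype.coe_piFinset]
    exact threeAPFree_pi ht
  simpa only [Fintype.card_piFinset, hcard] using
    hfree.le_addRothNumber (Fintype.piFinset_subset t s hts)

lemma two_le_addRothNumber_univ {R : Type*} [Ring R] [Fintype R] [DecidableEq R]
    (h2 : (2 : R) ≠ 0) : 2 ≤ addRothNumber (univ : Finset R) := by
  have hadd : (0 : R) + 0 ≠ 1 + 1 := by rwa [add_zero, one_add_one_eq_two, ne_comm]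
  have hne : (0 : R) ≠ 1 := fun h ↦ hadd (by rw [h])
  have hfree : ThreeAPFree (({0, 1} : Finset R) : Set R) := by
    rw [coe_pair]
    exact threeAPFree_pair hadd
  exact (card_pair hne).ge.trans (hfree.le_addRothNumber (subset_univ _))

lemma two_pow_card_le_addRothNumber_univ {ι R : Type*} [Fintype ι] [DecidableEq ι] [Ring R]
    [Fintype R] [DecidableEq R] (h2 : (2 : R) ≠ 0) :
    2 ^ Fintype.card ι ≤ addRothNumber (univ : Finset (ι → R)) :=
  calc
    2 ^ Fintype.card ι ≤ addRothNumber (univ : Finset R) ^ Fintype.card ι :=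
      Nat.pow_le_pow_left (two_le_addRothNumber_univ h2) _
    _ = ∏ _i : ι, addRothNumber (univ : Finset R) := by rw [prod_const, card_univ]
    _ ≤ addRothNumber (univ : Finset (ι → R)) := by
      simpa only [Fintype.piFinset_univ] using
        prod_addRothNumber_le_addRothNumber_piFinset fun _ : ι ↦ (univ : Finset R)

lemma four_le_addRothNumber_univ {ι R : Type*} [Fintype ι] [DecidableEq ι] [Ring R] [Fintype R]
    [DecidableEq R] (hι : 2 ≤ Fintype.card ι) (h2 : (2 : R) ≠ 0) :
    4 ≤ addRothNumber (univ : Finset (ι → R)) :=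
  (Nat.pow_le_pow_right two_pos hι).trans (two_pow_card_le_addRothNumber_univ h2)

section AddCommGroup

variable {V : Type*} [AddCommGroup V] [Fintype V] [DecidableEq V]

lemma exists_finpartition_forall_threeAPFree_not_isTransversal (hV : 4 ≤ Fintype.card V) {a b : V}
    (hab : a + a ≠ b + b) :
    ∃ P : Finpartition (univ : Finset V),
      #P.parts = 4 ∧ ∀ T : Finset V, ThreeAPFree (T : Set V) → ¬ IsTransversal T P := by
  obtain ⟨c, hc⟩ : ∃ c, a + c = b + b := ⟨b + b - a, add_sub_cancel a (b + b)⟩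
  have hne_ab : a ≠ b := fun h ↦ hab (by rw [h])
  have hne_ac : a ≠ c := fun h ↦ hab (by rw [← hc, ← h])
  have hne_bc : b ≠ c := fun h ↦ hne_ab (add_right_cancel (hc.trans (by rw [← h])))
  have hcard : #{a, b, c} = 3 := card_eq_three.2 ⟨a, b, c, hne_ab, hne_ac, hne_bc, rfl⟩
  obtain ⟨P, hPcard, hP⟩ := exists_finpartition_singleton_mem_parts (S := {a, b, c}) (by omega)
  refine ⟨P, by rw [hPcard, hcard], fun T hfree hT ↦ hne_ab ?_⟩
  have hmem : ∀ x ∈ ({a, b, c} : Finset V), x ∈ T :=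
    fun x hx ↦ hT.mem_of_singleton_mem_parts (hP x hx)
  exact hfree (hmem a (by simp)) (hmem b (by simp)) (hmem c (by simp)) hc

theorem stmt18_general (hV : 4 ≤ addRothNumber (univ : Finset V)) (G : Subgroup (Equiv.Perm V))
    (hG : ∀ g ∈ G, ∃ (A : V ≃+ V) (b : V), ∀ v, g v = A v + b) :
    ∃ (I : Finset V) (P : Finpartition (univ : Finset V)),
      #P.parts = #I ∧ ∀ g ∈ G, ¬ IsTransversal (I.image ⇑g) P := by
  obtain ⟨J, -, hJcard, hJ⟩ := addRothNumber_spec (univ : Finset V)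
  obtain ⟨I, hIJ, hIcard⟩ := exists_subset_card_eq (hV.trans hJcard.ge)
  have hI : ThreeAPFree (I : Set V) := hJ.mono hIJ
  obtain ⟨a, ha, b, hb, hne⟩ := one_lt_card.1 (show 1 < #I by omega)
  have hab : a + a ≠ b + b := fun h ↦ hne (hI ha hb ha h)
  obtain ⟨P, hPcard, hP⟩ := exists_finpartition_forall_threeAPFree_not_isTransversal
    (hV.trans (addRothNumber_le _)) hab
  refine ⟨I, P, hPcard.trans hIcard.symm, fun g hg ↦ hP _ ?_⟩
  obtain ⟨A, w, hgA⟩ := hG g hg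
  rw [coe_image, funext hgA]
  exact threeAPFree_image_affine hI (A := A.toAddMonoidHom) A.injective w

end AddCommGroup

theorem stmt18 (p k : ℕ) [Fact p.Prime] (hp : 5 ≤ p) (hk : 2 ≤ k)
    (G : Subgroup (Equiv.Perm (Fin k → ZMod p)))
    (hG : ∀ g ∈ G, ∃ (A : (Fin k → ZMod p) ≃ₗ[ZMod p] (Fin k → ZMod p))
      (b : Fin k → ZMod p), ∀ v, g v = A v + b) :
    ∃ (I : Finset (Fin k → ZMod p))
      (P : Finpartition (Finset.univ : Finset (Fin k → ZMod p))),
      P.parts.card = I.card ∧ ∀ g ∈ G, ¬ IsTransversal (I.image ⇑g) P := by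
  have h2 : (2 : ZMod p) ≠ 0 := Ring.two_ne_zero (by rw [ZMod.ringChar_zmod_n]; omega)
  exact stmt18_general (four_le_addRothNumber_univ (by simpa using hk) h2) G fun g hg ↦
    (hG g hg).imp' LinearEquiv.toAddEquiv fun _ h ↦ h
end

section
/- Let n ≥ 1, let G be a subgroup of S_n, let a ∈ T_n∖S_n be a singular transformation, and let E be the set of idempotents of ⟨G,a⟩∖G whose rank equals rank(a). Then ⟨G,a⟩∖G is idempotent generated if and only if every element of GaG = {g a h : g, h ∈ G} is contained in the subsemigroup ⟨E⟩ generated by E. -/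
/-!
Both directions rest on the identity `⟨G, a⟩ ∖ G = ⟨GaG⟩`. A word in `G ∪ {a}` that uses `a` can be
regrouped as a product of elements of `GaG`. Such a product is not a permutation: its first factor
is injective when the product is, its last factor is surjective when the product is, and each of
these two properties passes from an element of `GaG` to `a`.

Since rank does not increase under multiplication, `⟨GaG⟩` has no element of rank above that of `a`,
and in a factorization of an element of `GaG` into idempotents of `⟨GaG⟩` every factor has exactly
the rank of `a`. So `GaG` lies in the subsemigroup generated by all the idempotents iff it lies in
the one generated by those of the rank of `a`.
-/

open Finset

open DoubleCoset

section Semigroup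

variable {M : Type*}

theorem mem_closure_sep_le_of_le [Mul M] {β : Type*} [Preorder β] {f : M → β}
    (hleft : ∀ x y, f (x * y) ≤ f x) (hright : ∀ x y, f (x * y) ≤ f y) {A : Set M} {r : β} {u : M}
    (hu : u ∈ Subsemigroup.closure A) (hr : r ≤ f u) :
    u ∈ Subsemigroup.closure {x ∈ A | r ≤ f x} := by
  induction hu using Subsemigroup.closure_induction with
  | mem x hx => exact Subsemigroup.subset_closure ⟨hx, hr⟩
  | mul x y _ _ ihx ihy => exact mul_mem (ihx (hr.trans (hleft x y))) (ihy (hr.trans (hright x y)))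

theorem le_of_mem_closure_of_mul_le_left [Mul M] {β : Type*} [Preorder β] {f : M → β}
    (hleft : ∀ x y, f (x * y) ≤ f x) {A : Set M} {r : β} (hA : ∀ x ∈ A, f x ≤ r) {u : M}
    (hu : u ∈ Subsemigroup.closure A) : f u ≤ r := by
  induction hu using Subsemigroup.closure_induction with
  | mem x hx => exact hA x hx
  | mul x y _ _ ihx _ => exact (hleft x y).trans ihx

theorem le_of_mem_closure_of_mul_le_right [Mul M] {β : Type*} [Preorder β] {f : M → β}
    (hright : ∀ x y, f (x * y) ≤ f y) {A : Set M} {r : β} (hA : ∀ x ∈ A, f x ≤ r) {u : M}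
    (hu : u ∈ Subsemigroup.closure A) : f u ≤ r := by
  induction hu using Subsemigroup.closure_induction with
  | mem x hx => exact hA x hx
  | mul x y _ _ _ ihy => exact (hright x y).trans ihy

variable [Semigroup M] {S : Type*} [SetLike S M] {H : S} {a x u : M}

theorem mul_mem_closure_doubleCoset_of_mem_left [MulMemClass S M] (hx : x ∈ H)
    (hu : u ∈ Subsemigroup.closure (doubleCoset a (H : Set M) H)) :
    x * u ∈ Subsemigroup.closure (doubleCoset a (H : Set M) H) := by
  induction hu using Subsemigroup.closure_induction with
  | mem v hv =>
    obtain ⟨g, hg, h, hh, rfl⟩ := mem_doubleCoset.mp hv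
    exact Subsemigroup.subset_closure
      (mem_doubleCoset.mpr ⟨x * g, mul_mem hx hg, h, hh, by simp only [mul_assoc]⟩)
  | mul v w _ hw ihv _ => exact mul_assoc x v w ▸ mul_mem ihv hw

theorem mul_mem_closure_doubleCoset_of_mem_right [MulMemClass S M] (hx : x ∈ H)
    (hu : u ∈ Subsemigroup.closure (doubleCoset a (H : Set M) H)) :
    u * x ∈ Subsemigroup.closure (doubleCoset a (H : Set M) H) := by
  induction hu using Subsemigroup.closure_induction with
  | mem v hv =>
    obtain ⟨g, hg, h, hh, rfl⟩ := mem_doubleCoset.mp hv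
    exact Subsemigroup.subset_closure
      (mem_doubleCoset.mpr ⟨g, hg, h * x, mul_mem hh hx, mul_assoc (g * a) h x⟩)
  | mul v w hv _ _ ihw => exact (mul_assoc v w x).symm ▸ mul_mem hv ihw

theorem closure_doubleCoset_le_closure_insert :
    Subsemigroup.closure (doubleCoset a (H : Set M) H) ≤
      Subsemigroup.closure (insert a (H : Set M)) := by
  refine Subsemigroup.closure_le.mpr fun u hu => ?_
  obtain ⟨g, hg, h, hh, rfl⟩ := mem_doubleCoset.mp hu
  have mem_of_mem {k : M} (hk : k ∈ insert a (H : Set M)) :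
      k ∈ Subsemigroup.closure (insert a (H : Set M)) := Subsemigroup.subset_closure hk
  exact mul_mem (mul_mem (mem_of_mem (.inr hg)) (mem_of_mem (.inl rfl))) (mem_of_mem (.inr hh))

theorem coe_closure_insert_eq_union [MulMemClass S M] {e : M} (he : e ∈ H) (hea : e * a = a)
    (hae : a * e = a) :
    (Subsemigroup.closure (insert a (H : Set M)) : Set M) =
      (H : Set M) ∪ Subsemigroup.closure (doubleCoset a (H : Set M) H) := by
  refine Set.Subset.antisymm (fun u hu => ?_) (Set.union_subset
    ((Set.subset_insert a _).trans Subsemigroup.subset_closure)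
    closure_doubleCoset_le_closure_insert)
  induction hu using Subsemigroup.closure_induction with
  | mem x hx =>
    rcases hx with rfl | hx
    · exact .inr (Subsemigroup.subset_closure
        (mem_doubleCoset.mpr ⟨e, he, e, he, by rw [hea, hae]⟩))
    · exact .inl hx
  | mul x y _ _ ihx ihy =>
    rcases ihx with hx | hx <;> rcases ihy with hy | hy
    · exact .inl (mul_mem (S := S) hx hy)
    · exact .inr (mul_mem_closure_doubleCoset_of_mem_left hx hy)
    · exact .inr (mul_mem_closure_doubleCoset_of_mem_right hy hx)
    · exact .inr (mul_mem hx hy)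

end Semigroup

namespace Transf

variable {α : Type*}

/-- The image of a permutation group `G` in the full transformation semigroup. It is closed under
products although `ofPerm` reverses them, permutations being composed from right to left. -/
def permSubsemigroup (G : Subgroup (Equiv.Perm α)) : Subsemigroup (Transf α) where
  carrier := ofPerm '' (G : Set (Equiv.Perm α))
  mul_mem' := by
    rintro _ _ ⟨g, hg, rfl⟩ ⟨h, hh, rfl⟩
    exact ⟨h * g, G.mul_mem hh hg, rfl⟩

/-- The set `GaG = {g a h : g, h ∈ G}`, whose closure is the subsemigroup `⟨G, a⟩ ∖ G`
when `a` is singular. -/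
def permDoubleCoset (G : Subgroup (Equiv.Perm α)) (a : Transf α) : Set (Transf α) :=
  doubleCoset a (permSubsemigroup G : Set (Transf α)) (permSubsemigroup G)

/-- The rank of a transformation as a cardinal, which unlike `Transf.rank` distinguishes infinite
images from the empty one and so never increases under multiplication, whatever the type. -/
def cardRank (a : Transf α) : Cardinal := Cardinal.mk (Set.range a.toFun)

theorem rank_eq_rank_iff_cardRank_eq [Finite α] {a b : Transf α} :
    rank a = rank b ↔ cardRank a = cardRank b :=
  Cardinal.toNat_inj_of_lt_aleph0 (Cardinal.lt_aleph0_of_finite _) (Cardinal.lt_aleph0_of_finite _)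

theorem toFun_mul (a b : Transf α) : (a * b).toFun = b.toFun ∘ a.toFun := rfl

theorem toFun_ofPerm (g : Equiv.Perm α) : (ofPerm g).toFun = g := rfl

theorem cardRank_mul_le_left (a b : Transf α) : cardRank (a * b) ≤ cardRank a := by
  rw [cardRank, toFun_mul, Set.range_comp]
  exact Cardinal.mk_image_le

theorem cardRank_mul_le_right (a b : Transf α) : cardRank (a * b) ≤ cardRank b :=
  Cardinal.mk_le_mk_of_subset (Set.range_comp_subset_range a.toFun b.toFun)

theorem injective_of_injective_mul {a b : Transf α} (h : (a * b).toFun.Injective) :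
    a.toFun.Injective :=
  Function.Injective.of_comp (f := b.toFun) h

theorem surjective_of_surjective_mul {a b : Transf α} (h : (a * b).toFun.Surjective) :
    b.toFun.Surjective :=
  Function.Surjective.of_comp (g := a.toFun) h

variable {G : Subgroup (Equiv.Perm α)} {a u : Transf α}

theorem mem_permDoubleCoset :
    u ∈ permDoubleCoset G a ↔ ∃ g ∈ G, ∃ h ∈ G, u = ofPerm g * a * ofPerm h := by
  rw [permDoubleCoset, mem_doubleCoset]
  exact Set.exists_mem_image.trans
    (exists_congr fun _ => and_congr_right fun _ => Set.exists_mem_image)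

theorem cardRank_of_mem_permDoubleCoset (hu : u ∈ permDoubleCoset G a) :
    cardRank u = cardRank a := by
  obtain ⟨g, -, h, -, rfl⟩ := mem_permDoubleCoset.mp hu
  simp only [cardRank, toFun_mul, toFun_ofPerm, Set.range_comp h, EquivLike.range_comp,
    Cardinal.mk_image_eq h.injective]

theorem injective_iff_of_mem_permDoubleCoset (hu : u ∈ permDoubleCoset G a) :
    u.toFun.Injective ↔ a.toFun.Injective := by
  obtain ⟨g, -, h, -, rfl⟩ := mem_permDoubleCoset.mp hu
  simp only [toFun_mul, toFun_ofPerm, Equiv.comp_injective, Equiv.injective_comp]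

theorem surjective_iff_of_mem_permDoubleCoset (hu : u ∈ permDoubleCoset G a) :
    u.toFun.Surjective ↔ a.toFun.Surjective := by
  obtain ⟨g, -, h, -, rfl⟩ := mem_permDoubleCoset.mp hu
  simp only [toFun_mul, toFun_ofPerm, Equiv.comp_surjective, Equiv.surjective_comp]

theorem cardRank_le_of_mem_closure_permDoubleCoset
    (hu : u ∈ Subsemigroup.closure (permDoubleCoset G a)) : cardRank u ≤ cardRank a :=
  le_of_mem_closure_of_mul_le_left cardRank_mul_le_left
    (fun _ hx => (cardRank_of_mem_permDoubleCoset hx).le) hu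

-- The bounds on closures are applied to maps into `Prop`, where `≤` is implication.
theorem bijective_of_mem_closure_permDoubleCoset
    (hu : u ∈ Subsemigroup.closure (permDoubleCoset G a)) (hbij : u.toFun.Bijective) :
    a.toFun.Bijective :=
  ⟨le_of_mem_closure_of_mul_le_left (f := fun x : Transf α => x.toFun.Injective)
      (fun _ _ => injective_of_injective_mul)
      (fun _ hx => (injective_iff_of_mem_permDoubleCoset hx).mp) hu hbij.injective,
    le_of_mem_closure_of_mul_le_right (f := fun x : Transf α => x.toFun.Surjective)
      (fun _ _ => surjective_of_surjective_mul)
      (fun _ hx => (surjective_iff_of_mem_permDoubleCoset hx).mp) hu hbij.surjective⟩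

end Transf

open Transf

section IdempotentGenerated

variable {α : Type*}

theorem genGAminusG_eq_closure_permDoubleCoset (G : Subgroup (Equiv.Perm α)) {a : Transf α}
    (ha : ¬ Function.Bijective a.toFun) :
    genGAminusG G a = Subsemigroup.closure (permDoubleCoset G a) := by
  have disjoint_perm : Disjoint (permSubsemigroup G : Set (Transf α))
      (Subsemigroup.closure (permDoubleCoset G a)) := by
    rw [Set.disjoint_left]
    rintro _ ⟨g, -, rfl⟩ hg
    exact ha (bijective_of_mem_closure_permDoubleCoset hg g.bijective)
  have ofPerm_one_mem : ofPerm 1 ∈ permSubsemigroup G := ⟨1, G.one_mem, rfl⟩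
  calc genGAminusG G a
      = (Subsemigroup.closure (insert a (permSubsemigroup G : Set (Transf α))) : Set (Transf α)) \
          permSubsemigroup G := rfl
    _ = ((permSubsemigroup G : Set (Transf α)) ∪ Subsemigroup.closure (permDoubleCoset G a)) \
          permSubsemigroup G := by
      rw [coe_closure_insert_eq_union ofPerm_one_mem rfl rfl, permDoubleCoset]
    _ = Subsemigroup.closure (permDoubleCoset G a) := disjoint_perm.sup_sdiff_cancel_left

theorem isIdemGen_closure_iff {D : Set (Transf α)} :
    IsIdemGen (Subsemigroup.closure D : Set (Transf α)) ↔
      D ⊆ Subsemigroup.closure {u | u ∈ Subsemigroup.closure D ∧ u * u = u} := by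
  have closure_idem_le :
      Subsemigroup.closure {u | u ∈ Subsemigroup.closure D ∧ u * u = u} ≤ Subsemigroup.closure D :=
    Subsemigroup.closure_le.mpr fun _ hu => hu.1
  exact ⟨fun h => Subsemigroup.subset_closure.trans (Eq.subset h),
    fun h => Set.Subset.antisymm (Subsemigroup.closure_le.mpr h) closure_idem_le⟩

theorem stmt19_general (G : Subgroup (Equiv.Perm α)) (a : Transf α)
    (ha : ¬ Function.Bijective a.toFun) :
    IsIdemGen (genGAminusG G a) ↔
      ∀ g ∈ G, ∀ h ∈ G, ofPerm g * a * ofPerm h ∈ Subsemigroup.closure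
        {u | u ∈ genGAminusG G a ∧ u * u = u ∧ cardRank u = cardRank a} := by
  rw [genGAminusG_eq_closure_permDoubleCoset G ha, isIdemGen_closure_iff]
  constructor
  · intro hgen g hg h hh
    have mem_GaG : ofPerm g * a * ofPerm h ∈ permDoubleCoset G a :=
      mem_permDoubleCoset.mpr ⟨g, hg, h, hh, rfl⟩
    have mem_closure_idem_of_rank := mem_closure_sep_le_of_le cardRank_mul_le_left
      cardRank_mul_le_right (hgen mem_GaG) (cardRank_of_mem_permDoubleCoset mem_GaG).ge
    refine Subsemigroup.closure_mono (fun u hu => ?_) mem_closure_idem_of_rank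
    obtain ⟨⟨hmem, hidem⟩, hrank⟩ := hu
    exact ⟨hmem, hidem, (cardRank_le_of_mem_closure_permDoubleCoset hmem).antisymm hrank⟩
  · intro hmem u hu
    obtain ⟨g, hg, h, hh, rfl⟩ := mem_permDoubleCoset.mp hu
    refine Subsemigroup.closure_mono (fun v hv => ?_) (hmem g hg h hh)
    exact ⟨hv.1, hv.2.1⟩

end IdempotentGenerated

theorem stmt19 (n : ℕ) (hn : 1 ≤ n) (G : Subgroup (Equiv.Perm (Fin n)))
    (a : Transf (Fin n)) (ha : ¬ Function.Bijective a.toFun)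
    (E : Set (Transf (Fin n)))
    (hE : E = {u | u ∈ genGAminusG G a ∧ u * u = u ∧ Transf.rank u = Transf.rank a}) :
    IsIdemGen (genGAminusG G a) ↔
      ∀ g ∈ G, ∀ h ∈ G,
        Transf.ofPerm g * a * Transf.ofPerm h ∈ Subsemigroup.closure E := by
  subst hE
  simpa only [rank_eq_rank_iff_cardRank_eq] using stmt19_general G a ha
end
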